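/- (Adequacy) Assume → = →β ∪ →R is locally confluent and preserves typing, and the typing map Θ is adequate. Then for every environment Γ, terms t, T and substitution σ, if Γ ⊢ t : T and σ ⊨ Γ, then tσ ∈ ⟦T⟧σ. In particular, taking σ the identity, every typable term is strongly normalizing. -/

import Mathlib

set_option maxHeartbeats 1000000

/-! # Terms of λΠ/R (de Bruijn representation) -/

inductive Trm (F : Type) : Type
  | type : Trm F
  | kind : Trm F
  | var : ℕ → Trm F
  | sym : F → Trm F
  | pi : Trm F → Trm F → Trm F
  | app : Trm F → Trm F → Trm F
  | lam : Trm F → Trm F → Trm F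

namespace Trm

variable {F : Type}

/-- Lifting of a renaming under a binder. -/
def upRen (ρ : ℕ → ℕ) : ℕ → ℕ
  | 0 => 0
  | n + 1 => ρ n + 1

/-- Renaming of (de Bruijn) variables. -/
def rename (ρ : ℕ → ℕ) : Trm F → Trm F
  | .type => .type
  | .kind => .kind
  | .var n => .var (ρ n)
  | .sym f => .sym f
  | .pi A B => .pi (rename ρ A) (rename (upRen ρ) B)
  | .app t u => .app (rename ρ t) (rename ρ u)
  | .lam A b => .lam (rename ρ A) (rename (upRen ρ) b)

/-- Lifting of a substitution under a binder. -/
def up (σ : ℕ → Trm F) : ℕ → Trm F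
  | 0 => .var 0
  | n + 1 => rename Nat.succ (σ n)

/-- Capture-avoiding (parallel) substitution. -/
def subst (σ : ℕ → Trm F) : Trm F → Trm F
  | .type => .type
  | .kind => .kind
  | .var n => σ n
  | .sym f => .sym f
  | .pi A B => .pi (subst σ A) (subst (up σ) B)
  | .app t u => .app (subst σ t) (subst σ u)
  | .lam A b => .lam (subst σ A) (subst (up σ) b)

/-- Cons of a term on a substitution: `scons a σ` maps `0` to `a` and `n+1` to `σ n`. -/
def scons (a : Trm F) (σ : ℕ → Trm F) : ℕ → Trm F
  | 0 => a
  | n + 1 => σ n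

/-- Substitution of the first free variable: `t[x ↦ a]`. -/
def subst1 (a t : Trm F) : Trm F := subst (scons a .var) t

/-- Shifting of all free variables. -/
def shift : Trm F → Trm F := rename Nat.succ

/-- Application of a head term to a list of arguments: `appList h [t1,…,tn] = h t1 … tn`. -/
def appList (h : Trm F) : List (Trm F) → Trm F
  | [] => h
  | a :: as => appList (.app h a) as

/-- Free (de Bruijn) variables of a term. -/
def FV : Trm F → Set ℕ
  | .type => ∅
  | .kind => ∅
  | .var n => {n}
  | .sym _ => ∅
  | .pi A B => FV A ∪ {n | n + 1 ∈ FV B}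
  | .app t u => FV t ∪ FV u
  | .lam A b => FV A ∪ {n | n + 1 ∈ FV b}

/-- The class 𝕂 of kinds: `K = TYPE | Πx:t.K`. -/
def IsKind : Trm F → Prop
  | .type => True
  | .pi _ B => IsKind B
  | _ => False

/-- Sorts: `TYPE` and `KIND`. -/
def IsSort (s : Trm F) : Prop := s = .type ∨ s = .kind

/-- The product arity of a term: the number of leading products. -/
def piArity : Trm F → ℕ
  | .pi _ B => piArity B + 1
  | _ => 0

/-- Strip `n` leading products. -/
def piCodN : ℕ → Trm F → Trm F
  | 0, T => T
  | n + 1, .pi _ B => piCodN n B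
  | _ + 1, T => T

/-- The first `n` domains of the leading products, as a de Bruijn context
(type of variable `0` first, i.e. innermost first). -/
def teleN : ℕ → Trm F → List (Trm F)
  | 0, _ => []
  | n + 1, .pi A B => teleN n B ++ [A]
  | _ + 1, _ => []

/-- The full telescope of leading products, as a de Bruijn context. -/
def telescope (T : Trm F) : List (Trm F) := teleN (piArity T) T

/-- The domains of the leading products, outermost first. -/
def piDoms : Trm F → List (Trm F)
  | .pi A B => A :: piDoms B
  | _ => []

end Trm

/-- The subterm relation (reflexive and transitive). -/
inductive Subterm {F : Type} : Trm F → Trm F → Prop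
  | refl (t : Trm F) : Subterm t t
  | piL {t A B} : Subterm t A → Subterm t (.pi A B)
  | piR {t A B} : Subterm t B → Subterm t (.pi A B)
  | appL {t u v} : Subterm t u → Subterm t (.app u v)
  | appR {t u v} : Subterm t v → Subterm t (.app u v)
  | lamL {t A b} : Subterm t A → Subterm t (.lam A b)
  | lamR {t A b} : Subterm t b → Subterm t (.lam A b)

/-! # Rewriting -/

/-- A set of rewriting rules `l → r`. -/
abbrev Rules (F : Type) := Set (Trm F × Trm F)

/-- `R` is a rewriting system: for every rule `l → r`, `FV(r) ⊆ FV(l)` and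
`l` is of the form `f l⃗`. -/
def IsRewriteSystem {F : Type} (R : Rules F) : Prop :=
  ∀ p ∈ R, Trm.FV p.2 ⊆ Trm.FV p.1 ∧ ∃ (f : F) (ls : List (Trm F)), p.1 = Trm.appList (.sym f) ls

/-- A symbol is defined if it heads the left-hand side of some rule. -/
def Defined {F : Type} (R : Rules F) (f : F) : Prop :=
  ∃ (ls : List (Trm F)) (r : Trm F), (Trm.appList (.sym f) ls, r) ∈ R

/-- One-step reduction `→ = →β ∪ →R`: β-reduction together with the closure of the
rules of `R` by substitution and context. -/
inductive Red {F : Type} (R : Rules F) : Trm F → Trm F → Prop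
  | beta (A b a : Trm F) : Red R (.app (.lam A b) a) (Trm.subst1 a b)
  | rule {l r : Trm F} (σ : ℕ → Trm F) : (l, r) ∈ R → Red R (Trm.subst σ l) (Trm.subst σ r)
  | appL {t t' u} : Red R t t' → Red R (.app t u) (.app t' u)
  | appR {t u u'} : Red R u u' → Red R (.app t u) (.app t u')
  | piL {A A' B} : Red R A A' → Red R (.pi A B) (.pi A' B)
  | piR {A B B'} : Red R B B' → Red R (.pi A B) (.pi A B')
  | lamL {A A' b} : Red R A A' → Red R (.lam A b) (.lam A' b)
  | lamR {A b b'} : Red R b b' → Red R (.lam A b) (.lam A b')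

/-- Multi-step reduction `→*`. -/
def RedStar {F : Type} (R : Rules F) : Trm F → Trm F → Prop := Relation.ReflTransGen (Red R)

/-- Joinability `↓`. -/
def Joinable {F : Type} (R : Rules F) (t u : Trm F) : Prop :=
  ∃ v, RedStar R t v ∧ RedStar R u v

/-- Local confluence: `← · → ⊆ →* · *←`. -/
def LocallyConfluent {F : Type} (R : Rules F) : Prop :=
  ∀ t u v, Red R t u → Red R t v → Joinable R u v

/-- `t` is strongly normalizing (terminating): no infinite reduction sequence from `t`. -/
def SN {F : Type} (R : Rules F) (t : Trm F) : Prop := Acc (fun a b => Red R b a) t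

/-- The set of strongly normalizing terms. -/
def SNset {F : Type} (R : Rules F) : Set (Trm F) := {t | SN R t}

/-- `t` is in normal form. -/
def NormalForm {F : Type} (R : Rules F) (t : Trm F) : Prop := ∀ u, ¬ Red R t u

/-- Neutral terms: `(λx:A.t)u v⃗`, `x v⃗`, or `f v⃗` where every rule `f l⃗ → r ∈ R`
satisfies `|l⃗| ≤ |v⃗|`. -/
def Neutral {F : Type} (R : Rules F) (t : Trm F) : Prop :=
  (∃ (A b a : Trm F) (vs : List (Trm F)), t = Trm.appList (.app (.lam A b) a) vs) ∨
  (∃ (x : ℕ) (vs : List (Trm F)), t = Trm.appList (.var x) vs) ∨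
  (∃ (f : F) (vs : List (Trm F)), t = Trm.appList (.sym f) vs ∧
    ∀ (ls : List (Trm F)) (r : Trm F), (Trm.appList (.sym f) ls, r) ∈ R → ls.length ≤ vs.length)

/-- Computability predicates: `S ⊆ SN`, `S` is closed under reduction, and `S` contains
every neutral term all of whose one-step reducts are in `S`. -/
def IsCompPred {F : Type} (R : Rules F) (S : Set (Trm F)) : Prop :=
  S ⊆ SNset R ∧ (∀ t ∈ S, ∀ u, Red R t u → u ∈ S) ∧
  (∀ t, Neutral R t → (∀ u, Red R t u → u ∈ S) → t ∈ S)

/-! # Typing: λP extended with function symbols and conversion modulo `→` -/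

/-- The typing rules of λΠ/R: the rules of λP (in de Bruijn presentation) with the extra
rule (fun) `⊢ f : Θ_f` and conversion up to joinability for `→`. -/
inductive Typing {F : Type} (R : Rules F) (Θ sΘ : F → Trm F) :
    List (Trm F) → Trm F → Trm F → Prop
  | ax : Typing R Θ sΘ [] .type .kind
  | var {Γ A s} : Trm.IsSort s → Typing R Θ sΘ Γ A s →
      Typing R Θ sΘ (A :: Γ) (.var 0) (Trm.shift A)
  | weak {Γ A s b B} : Trm.IsSort s → Typing R Θ sΘ Γ A s → Typing R Θ sΘ Γ b B →
      Typing R Θ sΘ (A :: Γ) (Trm.shift b) (Trm.shift B)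
  | prod {Γ A B s} : Trm.IsSort s → Typing R Θ sΘ Γ A .type → Typing R Θ sΘ (A :: Γ) B s →
      Typing R Θ sΘ Γ (.pi A B) s
  | abs {Γ A b B s} : Trm.IsSort s → Typing R Θ sΘ (A :: Γ) b B →
      Typing R Θ sΘ Γ (.pi A B) s → Typing R Θ sΘ Γ (.lam A b) (.pi A B)
  | app {Γ t a A B} : Typing R Θ sΘ Γ t (.pi A B) → Typing R Θ sΘ Γ a A →
      Typing R Θ sΘ Γ (.app t a) (Trm.subst1 a B)
  | conv {Γ a A B s} : Typing R Θ sΘ Γ a A → Joinable R A B → Typing R Θ sΘ Γ B s →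
      Trm.IsSort s → Typing R Θ sΘ Γ a B
  | symb (f : F) : Trm.IsSort (sΘ f) → Typing R Θ sΘ [] (Θ f) (sΘ f) →
      Typing R Θ sΘ [] (.sym f) (Θ f)

/-- `→` preserves typing (subject reduction). -/
def PresTyping {F : Type} (R : Rules F) (Θ sΘ : F → Trm F) : Prop :=
  ∀ Γ t u T, Typing R Θ sΘ Γ t T → Red R t u → Typing R Θ sΘ Γ u T

/-- A substitution `γ` is well-typed from `Δ` to `Γ` (for a generic typing judgment `Ty`):
for all `(x : T) ∈ Δ`, `Ty Γ (xγ) (Tγ)`. -/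
def SubstTyped {F : Type} (Ty : List (Trm F) → Trm F → Trm F → Prop)
    (Γ : List (Trm F)) (γ : ℕ → Trm F) (Δ : List (Trm F)) : Prop :=
  ∀ i A, Δ[i]? = some A → Ty Γ (γ i) (Trm.subst (fun j => γ (j + i + 1)) A)

/-! # Interpretation of types as computability predicates -/

/-- `𝕀`: partial functions from terms to sets of terms. -/
abbrev Interp (F : Type) := Trm F → Part (Set (Trm F))

/-- Graph inclusion of partial functions. -/
def InterpLE {F : Type} (I J : Interp F) : Prop := ∀ T S, S ∈ I T → S ∈ J T

/-- `I` is the least fixpoint of `φ` on `𝕀` (ordered by graph inclusion). -/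
def IsLfpInterp {F : Type} (φ : Interp F → Interp F) (I : Interp F) : Prop :=
  φ I = I ∧ ∀ J, φ J = J → InterpLE I J

/-- The domain `D(I)`: terminating terms `T` such that whenever `T →* Πx:A.B`,
`A ∈ dom(I)` and `B[x↦a] ∈ dom(I)` for all `a ∈ I(A)`. -/
def domD {F : Type} (R : Rules F) (I : Interp F) : Set (Trm F) :=
  {T | SN R T ∧ ∀ A B, RedStar R T (.pi A B) →
    (I A).Dom ∧ ∀ S ∈ I A, ∀ a ∈ S, (I (Trm.subst1 a B)).Dom}

/-- `{t | ∀ a ∈ I(A), t a ∈ I(B[x↦a])}` (relational reading of the partial function `I`). -/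
def piPart {F : Type} (I : Interp F) (A B : Trm F) : Set (Trm F) :=
  {t | ∀ S ∈ I A, ∀ a ∈ S, ∀ S' ∈ I (Trm.subst1 a B), Trm.app t a ∈ S'}

open Classical in
/-- The monotone function `F : 𝕀 → 𝕀`: `dom(F(I)) = D(I)`; `F(I)(T) = SN` if the normal
form of `T` is not a product; `F(I)(T) = {t | ∀ a ∈ I(A), t a ∈ I(B[x↦a])}` if the normal
form of `T` is `Πx:A.B`. -/
noncomputable def interpF {F : Type} (R : Rules F) (I : Interp F) : Interp F := fun T =>
  ⟨T ∈ domD R I, fun _ =>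
    if h : ∃ A B, RedStar R T (.pi A B) ∧ NormalForm R (.pi A B) then
      piPart I h.choose h.choose_spec.choose
    else SNset R⟩

/-- The value of a partial interpretation at `T` (as a set). -/
def partMem {F : Type} (I : Interp F) (T : Trm F) : Set (Trm F) := {t | ∀ S ∈ I T, t ∈ S}

open Classical in
/-- The interpretation `⟦T⟧σ` of a term `T` wrt a substitution `σ`, relative to the least
fixpoint `I = ℐ` of `interpF`: `⟦s⟧σ = 𝒟` for `s` a sort;
`⟦Πx:A.K⟧σ = {t | ∀ a ∈ ⟦A⟧σ, t a ∈ ⟦K⟧[x↦a,σ]}` for `K` a kind;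
`⟦T⟧σ = ℐ(Tσ)` if `T` is neither a kind nor `KIND` and `Tσ ∈ 𝒟`; `⟦T⟧σ = SN` otherwise. -/
noncomputable def interp {F : Type} (R : Rules F) (I : Interp F) :
    Trm F → (ℕ → Trm F) → Set (Trm F)
  | .type, _ => domD R I
  | .kind, _ => domD R I
  | .pi A B, σ =>
      if Trm.IsKind B then
        {t | ∀ a ∈ interp R I A σ, Trm.app t a ∈ interp R I B (Trm.scons a σ)}
      else if Trm.subst σ (.pi A B) ∈ domD R I then partMem I (Trm.subst σ (.pi A B))
      else SNset R
  | .var n, σ =>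
      if Trm.subst σ (.var n) ∈ domD R I then partMem I (Trm.subst σ (.var n)) else SNset R
  | .sym g, σ =>
      if Trm.subst σ (.sym g) ∈ domD R I then partMem I (Trm.subst σ (.sym g)) else SNset R
  | .app t u, σ =>
      if Trm.subst σ (.app t u) ∈ domD R I then partMem I (Trm.subst σ (.app t u)) else SNset R
  | .lam A b, σ =>
      if Trm.subst σ (.lam A b) ∈ domD R I then partMem I (Trm.subst σ (.lam A b)) else SNset R

/-- `σ ⊨ Γ`: a substitution is adequate wrt an environment. -/
def Models {F : Type} (R : Rules F) (I : Interp F) (σ : ℕ → Trm F) (Γ : List (Trm F)) : Prop :=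
  ∀ i A, Γ[i]? = some A → σ i ∈ interp R I A (fun j => σ (j + i + 1))

/-- The typing map `Θ` is adequate: `f ∈ ⟦Θ_f⟧` whenever `⊢ Θ_f : s_f` and `Θ_f ∈ ⟦s_f⟧`. -/
def Adequate {F : Type} (R : Rules F) (Θ sΘ : F → Trm F) (I : Interp F) : Prop :=
  ∀ f : F, Typing R Θ sΘ [] (Θ f) (sΘ f) → Θ f ∈ interp R I (sΘ f) Trm.var →
    Trm.sym f ∈ interp R I (Θ f) Trm.var

/-- The substitution `[x⃗ ↦ l⃗]` (where `ls` lists the images of variables `0, 1, …`). -/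
def mkSubst {F : Type} (ls : List (Trm F)) : ℕ → Trm F := fun i =>
  (ls[i]?).getD (.var (i - ls.length))

/-- Composition of substitutions: `x ↦ (xγ)σ`. -/
def compSubst {F : Type} (γ σ : ℕ → Trm F) : ℕ → Trm F := fun i => Trm.subst σ (γ i)

/-- The set `ℂ` of terms `f t⃗` with `|t⃗| = arit(Θ_f)`, `⊢ Θ_f : s_f`, `Θ_f ∈ ⟦s_f⟧` and
`[x⃗↦t⃗] ⊨ Γ_f`. -/
def CC {F : Type} (R : Rules F) (Θ sΘ : F → Trm F) (I : Interp F) : Set (Trm F) :=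
  {t | ∃ (f : F) (ts : List (Trm F)), t = Trm.appList (.sym f) ts ∧
    ts.length = Trm.piArity (Θ f) ∧
    Typing R Θ sΘ [] (Θ f) (sΘ f) ∧ Θ f ∈ interp R I (sΘ f) Trm.var ∧
    Models R I (mkSubst ts.reverse) (Trm.telescope (Θ f))}

/-! # Dependency pairs -/

/-- Occurrences of `p` in a term, not at the root, such that `p` is not further applied
(i.e. `p` collects all the arguments of its head at this occurrence). -/
inductive MaxOccNR {F : Type} (p : Trm F) : Trm F → Prop
  | appL {u v} : MaxOccNR p u → MaxOccNR p (.app u v)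
  | appR {u v} : MaxOccNR p v → MaxOccNR p (.app u v)
  | appRroot {u} : MaxOccNR p (.app u p)
  | piL {A B} : MaxOccNR p A → MaxOccNR p (.pi A B)
  | piLroot {B} : MaxOccNR p (.pi p B)
  | piR {A B} : MaxOccNR p B → MaxOccNR p (.pi A B)
  | piRroot {A} : MaxOccNR p (.pi A p)
  | lamL {A b} : MaxOccNR p A → MaxOccNR p (.lam A b)
  | lamLroot {b} : MaxOccNR p (.lam p b)
  | lamR {A b} : MaxOccNR p b → MaxOccNR p (.lam A b)
  | lamRroot {A} : MaxOccNR p (.lam A p)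

/-- `p` occurs in `t` as a maximal application. -/
def MaxOcc {F : Type} (p t : Trm F) : Prop := t = p ∨ MaxOccNR p t

/-- Dependency pairs: `f l⃗ > g m⃗` iff there is a rule `f l⃗ → r ∈ R`, `g` is defined and
`g m⃗` is a subterm of `r` such that `m⃗` are all the arguments to which `g` is applied. -/
def DepPair {F : Type} (R : Rules F) (f : F) (ls : List (Trm F)) (g : F)
    (ms : List (Trm F)) : Prop :=
  Defined R g ∧ ∃ r, (Trm.appList (.sym f) ls, r) ∈ R ∧ MaxOcc (Trm.appList (.sym g) ms) r

/-- `f t⃗ →arg f u⃗`: reduction of exactly one argument. -/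
def ArgRed {F : Type} (R : Rules F) (t u : Trm F) : Prop :=
  ∃ (f : F) (pre post : List (Trm F)) (a b : Trm F), Red R a b ∧
    t = Trm.appList (.sym f) (pre ++ a :: post) ∧ u = Trm.appList (.sym f) (pre ++ b :: post)

/-- `>ₛ`: the closure of the dependency pair relation by substitution and left-application:
`f t₁…t_p >ₛ g u₁…u_q` iff there are a dependency pair `f l₁…l_i > g m₁…m_j` with `i ≤ p`
and `j ≤ q` and a substitution `σ` such that `t_k →* l_kσ` for `k ≤ i` and `m_kσ = u_k`
for `k ≤ j`. -/
def GTsub {F : Type} (R : Rules F) (t u : Trm F) : Prop :=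
  ∃ (f g : F) (ts us ls ms : List (Trm F)) (σ : ℕ → Trm F),
    t = Trm.appList (.sym f) ts ∧ u = Trm.appList (.sym g) us ∧
    DepPair R f ls g ms ∧ ls.length ≤ ts.length ∧ ms.length ≤ us.length ∧
    (∀ (k : ℕ) (tk lk : Trm F), ts[k]? = some tk → ls[k]? = some lk → RedStar R tk (Trm.subst σ lk)) ∧
    (∀ (k : ℕ) (mk : Trm F), ms[k]? = some mk → us[k]? = some (Trm.subst σ mk))

/-- The call relation `≻̃ = →arg* · >ₛ` on `ℂ`. -/
def CallRel {F : Type} (R : Rules F) (Θ sΘ : F → Trm F) (I : Interp F) (t u : Trm F) : Prop :=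
  t ∈ CC R Θ sΘ I ∧ u ∈ CC R Θ sΘ I ∧
    ∃ v, Relation.ReflTransGen (ArgRed R) t v ∧ GTsub R v u

/-! # Precedence and well-structured systems -/

/-- `f ⪰ g` (one step): `g` occurs in `Θ_f` or in the right-hand side of a rule of `f`. -/
def PrecBase {F : Type} (R : Rules F) (Θ : F → Trm F) (f g : F) : Prop :=
  Subterm (.sym g) (Θ f) ∨
  ∃ (ls : List (Trm F)) (r : Trm F), (Trm.appList (.sym f) ls, r) ∈ R ∧ Subterm (.sym g) r

/-- `⪰`: the smallest quasi-order containing `PrecBase`. -/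
def Preceq {F : Type} (R : Rules F) (Θ : F → Trm F) : F → F → Prop :=
  Relation.ReflTransGen (PrecBase R Θ)

/-- `≻`: the strict part of `⪰`. -/
def Prec {F : Type} (R : Rules F) (Θ : F → Trm F) (f g : F) : Prop :=
  Preceq R Θ f g ∧ ¬ Preceq R Θ g f

/-- The restricted type system `⊢_{≺ f}`: as `Typing`, but function symbols may only be
introduced when strictly smaller than `f` in the precedence. -/
inductive LTyp {F : Type} (R : Rules F) (Θ sΘ : F → Trm F) (f : F) :
    List (Trm F) → Trm F → Trm F → Prop
  | ax : LTyp R Θ sΘ f [] .type .kind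
  | var {Γ A s} : Trm.IsSort s → LTyp R Θ sΘ f Γ A s →
      LTyp R Θ sΘ f (A :: Γ) (.var 0) (Trm.shift A)
  | weak {Γ A s b B} : Trm.IsSort s → LTyp R Θ sΘ f Γ A s → LTyp R Θ sΘ f Γ b B →
      LTyp R Θ sΘ f (A :: Γ) (Trm.shift b) (Trm.shift B)
  | prod {Γ A B s} : Trm.IsSort s → LTyp R Θ sΘ f Γ A .type → LTyp R Θ sΘ f (A :: Γ) B s →
      LTyp R Θ sΘ f Γ (.pi A B) s
  | abs {Γ A b B s} : Trm.IsSort s → LTyp R Θ sΘ f (A :: Γ) b B →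
      LTyp R Θ sΘ f Γ (.pi A B) s → LTyp R Θ sΘ f Γ (.lam A b) (.pi A B)
  | app {Γ t a A B} : LTyp R Θ sΘ f Γ t (.pi A B) → LTyp R Θ sΘ f Γ a A →
      LTyp R Θ sΘ f Γ (.app t a) (Trm.subst1 a B)
  | conv {Γ a A B s} : LTyp R Θ sΘ f Γ a A → Joinable R A B → LTyp R Θ sΘ f Γ B s →
      Trm.IsSort s → LTyp R Θ sΘ f Γ a B
  | symb (g : F) : Prec R Θ f g → Trm.IsSort (sΘ g) → LTyp R Θ sΘ f [] (Θ g) (sΘ g) →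
      LTyp R Θ sΘ f [] (.sym g) (Θ g)

/-- The arguments `y⃗γ = [y₁γ, …, y_jγ]` of an instantiated dependency pair right-hand
side, where `y_j` is de Bruijn variable `0`. -/
def dpArgs {F : Type} (γ : ℕ → Trm F) (j : ℕ) : List (Trm F) :=
  (List.range j).reverse.map γ

/-- The restricted type system `⊢_{f l⃗}` (computability closure): as `Typing`, except that
types are required to be typable using symbols smaller than `f` only, and function symbols
are introduced either as undefined constants or through instances of dependency pairs of
`f l⃗`. -/
inductive RTyp {F : Type} (R : Rules F) (Θ sΘ : F → Trm F) (f : F) (ls : List (Trm F)) :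
    List (Trm F) → Trm F → Trm F → Prop
  | ax : RTyp R Θ sΘ f ls [] .type .kind
  | var {Γ A s} : Trm.IsSort s → LTyp R Θ sΘ f Γ A s →
      RTyp R Θ sΘ f ls (A :: Γ) (.var 0) (Trm.shift A)
  | weak {Γ A s b B} : Trm.IsSort s → LTyp R Θ sΘ f Γ A s → RTyp R Θ sΘ f ls Γ b B →
      RTyp R Θ sΘ f ls (A :: Γ) (Trm.shift b) (Trm.shift B)
  | prod {Γ A B s} : Trm.IsSort s → RTyp R Θ sΘ f ls Γ A .type →
      RTyp R Θ sΘ f ls (A :: Γ) B s → RTyp R Θ sΘ f ls Γ (.pi A B) s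
  | abs {Γ A b B s} : Trm.IsSort s → RTyp R Θ sΘ f ls (A :: Γ) b B →
      LTyp R Θ sΘ f Γ (.pi A B) s → RTyp R Θ sΘ f ls Γ (.lam A b) (.pi A B)
  | app {Γ t a A B s} : Trm.IsSort s → RTyp R Θ sΘ f ls Γ t (.pi A B) →
      RTyp R Θ sΘ f ls Γ a A → LTyp R Θ sΘ f Γ (.pi A B) s →
      RTyp R Θ sΘ f ls Γ (.app t a) (Trm.subst1 a B)
  | conv {Γ a A B s s'} : Trm.IsSort s → Trm.IsSort s' → RTyp R Θ sΘ f ls Γ a A →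
      Joinable R A B → LTyp R Θ sΘ f Γ B s → LTyp R Θ sΘ f Γ A s' →
      RTyp R Θ sΘ f ls Γ a B
  | dp {Γ : List (Trm F)} (g : F) (γ : ℕ → Trm F) (j : ℕ) :
      j ≤ Trm.piArity (Θ g) → Trm.IsSort (sΘ g) → LTyp R Θ sΘ f [] (Θ g) (sΘ g) →
      (∀ i A, (Trm.teleN j (Θ g))[i]? = some A →
        RTyp R Θ sΘ f ls Γ (γ i) (Trm.subst (fun k => γ (k + i + 1)) A)) →
      DepPair R f ls g (dpArgs γ j) →
      RTyp R Θ sΘ f ls Γ (Trm.appList (.sym g) (dpArgs γ j)) (Trm.subst γ (Trm.piCodN j (Θ g)))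
  | const (g : F) : ¬ Defined R g → Trm.IsSort (sΘ g) → LTyp R Θ sΘ f [] (Θ g) (sΘ g) →
      RTyp R Θ sΘ f ls [] (.sym g) (Θ g)

/-- `R` is well-structured (wrt the assignment `Δ` of an environment to every rule):
(a) `≻` is well-founded; (b) `|l⃗| ≤ arit(Θ_f)` for every rule `f l⃗ → r`;
(c) `|m⃗| ≤ arit(Θ_g)` for every dependency pair `f l⃗ > g m⃗`;
(d) `Δ_{f l⃗→r} ⊢_{f l⃗} r : U[x⃗↦l⃗]` for every rule `f l⃗ → r`, where `Θ_f = Πx⃗:T⃗.U`. -/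
def WellStructured {F : Type} (R : Rules F) (Θ sΘ : F → Trm F)
    (Δ : Trm F → Trm F → List (Trm F)) : Prop :=
  WellFounded (fun g f => Prec R Θ f g) ∧
  (∀ l r, (l, r) ∈ R → ∀ (f : F) ls, l = Trm.appList (.sym f) ls →
    ls.length ≤ Trm.piArity (Θ f)) ∧
  (∀ (f : F) ls (g : F) ms, DepPair R f ls g ms → ms.length ≤ Trm.piArity (Θ g)) ∧
  (∀ l r, (l, r) ∈ R → ∀ (f : F) ls, l = Trm.appList (.sym f) ls →
    RTyp R Θ sΘ f ls (Δ l r) r (Trm.subst (mkSubst ls.reverse) (Trm.piCodN ls.length (Θ f))))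

/-- `R` is accessible: for every rule `f l⃗ → r` with `Θ_f = Πx⃗:T⃗.U`, `|x⃗| = |l⃗|`, and
every substitution `σ`, `σ ⊨ Δ_{f l⃗→r}` whenever `⊢ Θ_f : s_f`, `Θ_f ∈ ⟦s_f⟧` and
`[x⃗↦l⃗]σ ⊨ x⃗:T⃗`. -/
def Accessible {F : Type} (R : Rules F) (Θ sΘ : F → Trm F) (I : Interp F)
    (Δ : Trm F → Trm F → List (Trm F)) : Prop :=
  ∀ l r, (l, r) ∈ R → ∀ (f : F) ls, l = Trm.appList (.sym f) ls → ∀ σ : ℕ → Trm F,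
    Typing R Θ sΘ [] (Θ f) (sΘ f) → Θ f ∈ interp R I (sΘ f) Trm.var →
    Models R I (compSubst (mkSubst ls.reverse) σ) (Trm.teleN ls.length (Θ f)) →
    Models R I σ (Δ l r)

/-- A term in `𝕂 ∪ {KIND}`. -/
def IsKindLike {F : Type} (t : Trm F) : Prop := Trm.IsKind t ∨ t = .kind

/-- `R` is plain function-passing (PFP): for every rule `f l⃗ → r` with `Θ_f = Πx⃗:T⃗.U` and
`|x⃗| = |l⃗|`, no `l_i` is a kind or `KIND`, and every `(y : T) ∈ Δ_{f l⃗→r}` satisfies: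
either there is `i` with `y = l_i` and `T = T_i[x⃗↦l⃗]`, or `y ∈ FV(l_i)` and `T = D t⃗`
with `D` undefined and `|t⃗| = arit(Θ_D)`. -/
def PFP {F : Type} (R : Rules F) (Θ : F → Trm F) (Δ : Trm F → Trm F → List (Trm F)) : Prop :=
  ∀ l r, (l, r) ∈ R → ∀ (f : F) ls, l = Trm.appList (.sym f) ls →
    (∀ li ∈ ls, ¬ IsKindLike li) ∧
    (∀ i A, (Δ l r)[i]? = some A →
      (∃ (k : ℕ) (Tk : Trm F), ls[k]? = some (Trm.var i) ∧ (Trm.piDoms (Θ f))[k]? = some Tk ∧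
        Trm.rename (fun j => j + i + 1) A = Trm.subst (mkSubst ((ls.take k).reverse)) Tk) ∨
      ((∃ (k : ℕ) (lk : Trm F), ls[k]? = some lk ∧ i ∈ Trm.FV lk) ∧
        ∃ (D : F) (ts : List (Trm F)), Trm.rename (fun j => j + i + 1) A =
          Trm.appList (.sym D) ts ∧ ¬ Defined R D ∧ ts.length = Trm.piArity (Θ D)))

/-! # Size-change termination -/

/-- Entries of size-change matrices: `−1`, `0` or `∞`. -/
inductive SCTe : Type
  | minusOne : SCTe
  | zero : SCTe
  | infty : SCTe
deriving DecidableEq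

/-- Min-plus multiplication of entries (addition, truncated at `−1`). -/
def SCTe.comp : SCTe → SCTe → SCTe
  | .infty, _ => .infty
  | _, .infty => .infty
  | .minusOne, _ => .minusOne
  | _, .minusOne => .minusOne
  | .zero, .zero => .zero

/-- Minimum of entries (`−1 < 0 < ∞`). -/
def SCTe.min : SCTe → SCTe → SCTe
  | .minusOne, _ => .minusOne
  | _, .minusOne => .minusOne
  | .zero, _ => .zero
  | .infty, x => x

/-- Base of the relation `⊵`: `f t₁…t_n ⊵ t_i` for `f ∈ F`. -/
def ArgSubBase {F : Type} (t u : Trm F) : Prop :=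
  ∃ (f : F) (ts : List (Trm F)), t = Trm.appList (.sym f) ts ∧ u ∈ ts

/-- `⊵`: the smallest transitive relation such that `f t₁…t_n ⊵ t_i` for `f ∈ F`. -/
def ArgGT {F : Type} : Trm F → Trm F → Prop := Relation.TransGen ArgSubBase

open Classical in
/-- The size-change matrix of a dependency pair `f l₁…l_p > g m₁…m_q`:
`a_{ij} = −1` if `l_i ⊵ m_j`, `a_{ij} = 0` if `l_i = m_j`, `a_{ij} = ∞` otherwise
(in particular if `i > p` or `j > q`). -/
noncomputable def dpMatrix {F : Type} (ls ms : List (Trm F)) : ℕ → ℕ → SCTe := fun i j =>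
  match ls[i]?, ms[j]? with
  | some li, some mj =>
      if ArgGT li mj then .minusOne else if li = mj then .zero else .infty
  | _, _ => .infty

/-- Min-plus product of matrices, the middle dimension being `d`. -/
def matComp (d : ℕ) (M N : ℕ → ℕ → SCTe) : ℕ → ℕ → SCTe := fun i j =>
  ((List.range d).map fun k => (M i k).comp (N k j)).foldr SCTe.min .infty

/-- The transitive closure of the call graph of `R`: edges are labeled by the matrices of
the dependency pairs, multiplied in the min-plus semiring along paths. -/
inductive TCEdge {F : Type} (R : Rules F) (Θ : F → Trm F) : F → F → (ℕ → ℕ → SCTe) → Prop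
  | base {f g : F} {ls ms : List (Trm F)} : DepPair R f ls g ms →
      TCEdge R Θ f g (dpMatrix ls ms)
  | comp {f g h : F} {M N : ℕ → ℕ → SCTe} : TCEdge R Θ f g M → TCEdge R Θ g h N →
      TCEdge R Θ f h (matComp (Trm.piArity (Θ g)) M N)

/-- `R` is size-change terminating: in the transitive closure of the call graph, every
idempotent matrix labeling a loop has some `−1` on its diagonal. -/
def SCT {F : Type} (R : Rules F) (Θ : F → Trm F) : Prop :=
  ∀ (f : F) (M : ℕ → ℕ → SCTe), TCEdge R Θ f f M → matComp (Trm.piArity (Θ f)) M M = M →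
    ∃ i < Trm.piArity (Θ f), M i i = SCTe.minusOne

/-! Types are interpreted through the least fixpoint `ℐ`. Leastness makes `𝒟` inductively generated,
so that every `ℐ(T)` is a computability predicate; local confluence, which by Newman's lemma is
confluence on terminating terms, makes `ℐ` invariant under reduction. Since reduction preserves
typing, kinds are not convertible to other typable terms, and `⟦Πx:A.B⟧σ` is the dependent product
of the `⟦B⟧[x↦a,σ]`, `a ∈ ⟦A⟧σ`, for every typable product. With this, `tσ ∈ ⟦T⟧σ` and `Tσ ∈ 𝒟`
follow together by induction on the derivation of `Γ ⊢ t : T`. Variables belong to every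
computability predicate, so the identity substitution models every valid environment, whence
termination. -/

/-! # Substitution calculus -/

namespace Trm

variable {F : Type}

theorem up_comp_var (ρ : ℕ → ℕ) : up (fun i => (var (ρ i) : Trm F)) = fun i => var (upRen ρ i) := by
  funext i; cases i <;> rfl

theorem rename_eq_subst (ρ : ℕ → ℕ) (t : Trm F) : rename ρ t = subst (fun i => var (ρ i)) t := by
  induction t generalizing ρ <;> simp_all [rename, subst, up_comp_var]

theorem up_comp_upRen (σ : ℕ → Trm F) (ρ : ℕ → ℕ) :
    (fun i => up σ (upRen ρ i)) = up (fun i => σ (ρ i)) := by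
  funext i; cases i <;> rfl

theorem subst_rename (σ : ℕ → Trm F) (ρ : ℕ → ℕ) (t : Trm F) :
    subst σ (rename ρ t) = subst (fun i => σ (ρ i)) t := by
  induction t generalizing σ ρ <;> simp_all [rename, subst, up_comp_upRen]

theorem rename_rename (ρ ρ' : ℕ → ℕ) (t : Trm F) :
    rename ρ' (rename ρ t) = rename (fun i => ρ' (ρ i)) t := by
  rw [rename_eq_subst, subst_rename, rename_eq_subst]

theorem rename_comp_up (σ : ℕ → Trm F) (ρ : ℕ → ℕ) :
    (fun i => rename (upRen ρ) (up σ i)) = up (fun i => rename ρ (σ i)) := by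
  funext i
  cases i with
  | zero => rfl
  | succ n => simp only [up, rename_rename, upRen, Nat.succ_eq_add_one]

theorem rename_subst (σ : ℕ → Trm F) (ρ : ℕ → ℕ) (t : Trm F) :
    rename ρ (subst σ t) = subst (fun i => rename ρ (σ i)) t := by
  induction t generalizing σ ρ <;> simp_all [rename, subst, rename_comp_up]

theorem subst_comp_up (σ τ : ℕ → Trm F) :
    (fun i => subst (up τ) (up σ i)) = up (fun i => subst τ (σ i)) := by
  funext i
  cases i with
  | zero => rfl
  | succ n => simp only [up, subst_rename, rename_subst]

theorem subst_subst (σ τ : ℕ → Trm F) (t : Trm F) :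
    subst τ (subst σ t) = subst (fun i => subst τ (σ i)) t := by
  induction t generalizing σ τ <;> simp_all [subst, subst_comp_up]

theorem up_var : up (var : ℕ → Trm F) = var := by
  funext i; cases i <;> rfl

theorem subst_var (t : Trm F) : subst var t = t := by
  induction t <;> simp_all [subst, up_var]

theorem subst_scons_comp_up (τ σ : ℕ → Trm F) (a : Trm F) :
    (fun i => subst (scons a σ) (up τ i)) = scons a (fun i => subst σ (τ i)) := by
  funext i
  cases i with
  | zero => rfl
  | succ n => simp only [up, subst_rename, scons]

theorem subst_comp_scons (σ τ : ℕ → Trm F) (a : Trm F) :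
    (fun i => subst σ (scons a τ i)) = scons (subst σ a) (fun i => subst σ (τ i)) := by
  funext i; cases i <;> rfl

theorem subst1_subst_up (a : Trm F) (σ : ℕ → Trm F) (t : Trm F) :
    subst1 a (subst (up σ) t) = subst (scons a σ) t := by
  simp only [subst1, subst_subst, subst_scons_comp_up, subst_var]

theorem subst_subst1 (σ : ℕ → Trm F) (a t : Trm F) :
    subst σ (subst1 a t) = subst (scons (subst σ a) σ) t := by
  rw [subst1, subst_subst, subst_comp_scons]
  rfl

theorem IsSort.subst_eq {s : Trm F} (hs : s.IsSort) (σ : ℕ → Trm F) : s.subst σ = s := by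
  obtain rfl | rfl := hs <;> rfl

theorem IsSort.shift_eq {s : Trm F} (hs : s.IsSort) : s.shift = s := by
  obtain rfl | rfl := hs <;> rfl

end Trm

section Kinds

open Trm

variable {F : Type}

theorem isKindLike_pi {A B : Trm F} : IsKindLike (.pi A B) ↔ IsKind B := by
  simp [IsKindLike, IsKind]

theorem Trm.rename_eq_kind_iff {ρ : ℕ → ℕ} {t : Trm F} : rename ρ t = .kind ↔ t = .kind := by
  cases t <;> simp [rename]

theorem Trm.isKind_rename_iff (ρ : ℕ → ℕ) (t : Trm F) : IsKind (rename ρ t) ↔ IsKind t := by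
  induction t generalizing ρ with
  | pi _ _ _ ihB => exact ihB _
  | _ => exact Iff.rfl

theorem isKindLike_rename_iff (ρ : ℕ → ℕ) (t : Trm F) :
    IsKindLike (rename ρ t) ↔ IsKindLike t :=
  or_congr (isKind_rename_iff ρ t) rename_eq_kind_iff

theorem not_isKindLike_var (n : ℕ) : ¬ IsKindLike (var n : Trm F) := by
  simp [IsKindLike, IsKind]

theorem not_isKindLike_up {τ : ℕ → Trm F} (hτ : ∀ i, ¬ IsKindLike (τ i)) :
    ∀ i, ¬ IsKindLike (up τ i)
  | 0 => not_isKindLike_var 0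
  | n + 1 => (isKindLike_rename_iff _ _).not.2 (hτ n)

theorem Trm.isKind_subst_iff {τ : ℕ → Trm F} (hτ : ∀ i, ¬ IsKindLike (τ i)) (t : Trm F) :
    IsKind (subst τ t) ↔ IsKind t := by
  induction t generalizing τ with
  | var n => exact iff_of_false (fun h => hτ n (.inl h)) id
  | pi _ _ _ ihB => exact ihB (not_isKindLike_up hτ)
  | _ => exact Iff.rfl

end Kinds

/-! # Reduction -/

section Spines

open Trm

variable {F : Type}

/-- The head `h` of an application `h t₁ … tₙ`. -/
def Trm.spineHead : Trm F → Trm F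
  | .app t _ => spineHead t
  | t => t

/-- The number `n` of arguments of an application `h t₁ … tₙ`. -/
def Trm.spineLength : Trm F → ℕ
  | .app t _ => spineLength t + 1
  | _ => 0

theorem Trm.spineHead_appList (h : Trm F) (vs : List (Trm F)) :
    spineHead (appList h vs) = spineHead h := by
  induction vs generalizing h with
  | nil => rfl
  | cons a _ ih => exact ih _

theorem Trm.spineLength_appList (h : Trm F) (vs : List (Trm F)) :
    spineLength (appList h vs) = spineLength h + vs.length := by
  induction vs generalizing h with
  | nil => rfl
  | cons a vs ih =>
    rw [appList, ih, spineLength, List.length_cons]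
    omega

theorem Trm.appList_concat (h a : Trm F) (vs : List (Trm F)) :
    appList h (vs ++ [a]) = .app (appList h vs) a := by
  induction vs generalizing h with
  | nil => rfl
  | cons b _ ih => exact ih _

theorem Trm.subst_appList (σ : ℕ → Trm F) (h : Trm F) (vs : List (Trm F)) :
    subst σ (appList h vs) = appList (subst σ h) (vs.map (subst σ)) := by
  induction vs generalizing h with
  | nil => rfl
  | cons b _ ih => exact ih _

/-- Every left-hand side of a rule is of the form `f l⃗`, so that sorts, variables, products and
abstractions are not instances of left-hand sides. -/
def SymbolHeaded (R : Rules F) : Prop :=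
  ∀ p ∈ R, ∃ (f : F) (ls : List (Trm F)), p.1 = appList (.sym f) ls

variable {R : Rules F}

theorem SymbolHeaded.exists_spine (hR : SymbolHeaded R) {l r : Trm F} (h : (l, r) ∈ R)
    (σ : ℕ → Trm F) : ∃ (f : F) (ls : List (Trm F)), (appList (.sym f) ls, r) ∈ R ∧
      (l.subst σ).spineHead = .sym f ∧ (l.subst σ).spineLength = ls.length := by
  obtain ⟨f, ls, rfl⟩ := hR _ h
  refine ⟨f, ls, h, ?_, ?_⟩
  · rw [subst_appList, spineHead_appList]; rfl
  · simp [subst_appList, spineLength_appList, subst, spineLength]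

theorem SymbolHeaded.subst_ne (hR : SymbolHeaded R) {l r t : Trm F} (h : (l, r) ∈ R)
    (σ : ℕ → Trm F) (ht : ∀ f, t.spineHead ≠ .sym f) : l.subst σ ≠ t := by
  rintro rfl
  obtain ⟨f, -, -, hf, -⟩ := hR.exists_spine h σ
  exact ht f hf

end Spines

section Reduction

variable {F : Type} {R : Rules F}

theorem Red.subst {t u : Trm F} (h : Red R t u) (σ : ℕ → Trm F) :
    Red R (t.subst σ) (u.subst σ) := by
  induction h generalizing σ with
  | beta A b a =>
    have := Red.beta (R := R) (A.subst σ) (b.subst (Trm.up σ)) (a.subst σ)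
    rwa [Trm.subst1_subst_up, ← Trm.subst_subst1] at this
  | rule τ hlr =>
    rw [Trm.subst_subst, Trm.subst_subst]
    exact .rule _ hlr
  | appL _ ih => exact .appL (ih σ)
  | appR _ ih => exact .appR (ih σ)
  | piL _ ih => exact .piL (ih σ)
  | piR _ ih => exact .piR (ih _)
  | lamL _ ih => exact .lamL (ih σ)
  | lamR _ ih => exact .lamR (ih _)

theorem Red.app_inv (hR : SymbolHeaded R) {t a u : Trm F} (h : Red R (.app t a) u) :
    (∃ A b, t = .lam A b ∧ u = Trm.subst1 a b) ∨
    (∃ (f : F) (ls : List (Trm F)) (r : Trm F), (Trm.appList (.sym f) ls, r) ∈ R ∧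
      t.spineHead = .sym f ∧ t.spineLength + 1 = ls.length) ∨
    (∃ t', u = .app t' a ∧ Red R t t') ∨ (∃ a', u = .app t a' ∧ Red R a a') := by
  generalize hv : Trm.app t a = v at h
  cases h with
  | beta A b a => cases hv; exact .inl ⟨A, b, rfl, rfl⟩
  | rule σ hlr =>
    obtain ⟨f, ls, hf, hhead, hlength⟩ := hR.exists_spine hlr σ
    rw [← hv] at hhead hlength
    exact .inr (.inl ⟨f, ls, _, hf, hhead, hlength⟩)
  | appL h => cases hv; exact .inr (.inr (.inl ⟨_, rfl, h⟩))
  | appR h => cases hv; exact .inr (.inr (.inr ⟨_, rfl, h⟩))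
  | _ => cases hv

theorem Red.pi_inv (hR : SymbolHeaded R) {A B u : Trm F} (h : Red R (.pi A B) u) :
    (∃ A', u = .pi A' B ∧ Red R A A') ∨ (∃ B', u = .pi A B' ∧ Red R B B') := by
  generalize ht : Trm.pi A B = t at h
  cases h with
  | rule σ hlr => exact (hR.subst_ne hlr σ (by simp [Trm.spineHead]) ht.symm).elim
  | piL h => cases ht; exact .inl ⟨_, rfl, h⟩
  | piR h => cases ht; exact .inr ⟨_, rfl, h⟩
  | _ => cases ht

theorem Red.lam_inv (hR : SymbolHeaded R) {A b u : Trm F} (h : Red R (.lam A b) u) :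
    (∃ A', u = .lam A' b ∧ Red R A A') ∨ (∃ b', u = .lam A b' ∧ Red R b b') := by
  generalize ht : Trm.lam A b = t at h
  cases h with
  | rule σ hlr => exact (hR.subst_ne hlr σ (by simp [Trm.spineHead]) ht.symm).elim
  | lamL h => cases ht; exact .inl ⟨_, rfl, h⟩
  | lamR h => cases ht; exact .inr ⟨_, rfl, h⟩
  | _ => cases ht

theorem normalForm_of_isSort (hR : SymbolHeaded R) {s : Trm F} (hs : s.IsSort) :
    NormalForm R s := by
  intro u h
  cases h with
  | rule σ hlr =>
    exact hR.subst_ne hlr σ (by obtain h | h := hs <;> simp [h, Trm.spineHead]) rfl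
  | _ => simp [Trm.IsSort] at hs

theorem normalForm_var (hR : SymbolHeaded R) (n : ℕ) : NormalForm R (.var n) := by
  intro u h
  generalize ht : Trm.var n = t at h
  cases h with
  | rule σ hlr => exact hR.subst_ne hlr σ (by simp [Trm.spineHead]) ht.symm
  | _ => cases ht

theorem RedStar.subst {t u : Trm F} (h : RedStar R t u) (σ : ℕ → Trm F) :
    RedStar R (t.subst σ) (u.subst σ) :=
  Relation.ReflTransGen.lift _ (fun _ _ h => h.subst σ) _ _ h

theorem RedStar.pi {A A' B B' : Trm F} (hA : RedStar R A A') (hB : RedStar R B B') :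
    RedStar R (.pi A B) (.pi A' B') :=
  (Relation.ReflTransGen.lift (Trm.pi · B) (fun _ _ => .piL) _ _ hA).trans
    (Relation.ReflTransGen.lift (Trm.pi A' ·) (fun _ _ => .piR) _ _ hB)

theorem RedStar.app {t t' u u' : Trm F} (ht : RedStar R t t') (hu : RedStar R u u') :
    RedStar R (.app t u) (.app t' u') :=
  (Relation.ReflTransGen.lift (Trm.app · u) (fun _ _ => .appL) _ _ ht).trans
    (Relation.ReflTransGen.lift (Trm.app t' ·) (fun _ _ => .appR) _ _ hu)

theorem RedStar.lam {A A' b b' : Trm F} (hA : RedStar R A A') (hb : RedStar R b b') :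
    RedStar R (.lam A b) (.lam A' b') :=
  (Relation.ReflTransGen.lift (Trm.lam · b) (fun _ _ => .lamL) _ _ hA).trans
    (Relation.ReflTransGen.lift (Trm.lam A' ·) (fun _ _ => .lamR) _ _ hb)

theorem redStar_up {σ τ : ℕ → Trm F} (h : ∀ i, RedStar R (σ i) (τ i)) :
    ∀ i, RedStar R (Trm.up σ i) (Trm.up τ i)
  | 0 => .refl
  | n + 1 => by
    simp only [Trm.up, Trm.rename_eq_subst]
    exact (h n).subst _

theorem redStar_scons {a a' : Trm F} (ha : RedStar R a a') {σ τ : ℕ → Trm F}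
    (h : ∀ i, RedStar R (σ i) (τ i)) : ∀ i, RedStar R (Trm.scons a σ i) (Trm.scons a' τ i)
  | 0 => ha
  | n + 1 => h n

theorem RedStar.subst_pointwise {t u : Trm F} (htu : RedStar R t u) {σ τ : ℕ → Trm F}
    (h : ∀ i, RedStar R (σ i) (τ i)) : RedStar R (t.subst σ) (u.subst τ) := by
  refine (htu.subst σ).trans ?_
  clear htu
  induction u generalizing σ τ with
  | var n => exact h n
  | pi A B ihA ihB => exact RedStar.pi (ihA h) (ihB (redStar_up h))
  | lam A b ihA ihb => exact RedStar.lam (ihA h) (ihb (redStar_up h))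
  | app t u iht ihu => exact RedStar.app (iht h) (ihu h)
  | _ => exact .refl

theorem RedStar.subst1_left {a a' : Trm F} (h : RedStar R a a') (t : Trm F) :
    RedStar R (Trm.subst1 a t) (Trm.subst1 a' t) :=
  subst_pointwise .refl (redStar_scons h fun _ => .refl)

theorem RedStar.pi_inv (hR : SymbolHeaded R) {A B u : Trm F} (h : RedStar R (.pi A B) u) :
    ∃ A' B', u = .pi A' B' ∧ RedStar R A A' ∧ RedStar R B B' := by
  induction h with
  | refl => exact ⟨A, B, rfl, .refl, .refl⟩
  | tail _ h ih =>
    obtain ⟨A', B', rfl, hA, hB⟩ := ih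
    obtain ⟨A'', rfl, hA'⟩ | ⟨B'', rfl, hB'⟩ := h.pi_inv hR
    · exact ⟨_, _, rfl, hA.tail hA', hB⟩
    · exact ⟨_, _, rfl, hA, hB.tail hB'⟩

theorem Joinable.subst {t u : Trm F} (h : Joinable R t u) (σ : ℕ → Trm F) :
    Joinable R (t.subst σ) (u.subst σ) := by
  obtain ⟨v, ht, hu⟩ := h
  exact ⟨_, ht.subst σ, hu.subst σ⟩

theorem NormalForm.eq_of_redStar {t u : Trm F} (h : NormalForm R t) (hu : RedStar R t u) :
    u = t := by
  obtain rfl | ⟨v, hv, -⟩ := hu.cases_head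
  · rfl
  · exact (h _ hv).elim

theorem NormalForm.sn {t : Trm F} (h : NormalForm R t) : SN R t :=
  .intro _ fun u hu => (h u hu).elim

theorem SN.of_map {g : Trm F → Trm F} (hg : ∀ {t u}, Red R t u → Red R (g t) (g u)) {t : Trm F}
    (h : SN R (g t)) : SN R t :=
  Subrelation.accessible hg (InvImage.accessible g h)

theorem SN.pi (hR : SymbolHeaded R) {A B : Trm F} (hA : SN R A) (hB : SN R B) :
    SN R (.pi A B) := by
  induction hA generalizing B with
  | intro A _ ihA =>
    induction hB with
    | intro B hB ihB =>
      refine .intro _ fun u hu => ?_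
      obtain ⟨A', rfl, h⟩ | ⟨B', rfl, h⟩ := Red.pi_inv hR hu
      · exact ihA A' h (.intro _ hB)
      · exact ihB B' h

theorem SN.exists_normalForm {t : Trm F} (h : SN R t) : ∃ u, RedStar R t u ∧ NormalForm R u := by
  induction h with
  | intro t _ ih =>
    by_cases hn : NormalForm R t
    · exact ⟨t, .refl, hn⟩
    · simp only [NormalForm, not_forall, not_not] at hn
      obtain ⟨u, hu⟩ := hn
      obtain ⟨v, hv, hn⟩ := ih u hu
      exact ⟨v, hv.head hu, hn⟩

/-- Newman's lemma, localized at a terminating term. -/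
theorem SN.joinable_of_redStar (hconf : LocallyConfluent R) {t u v : Trm F} (ht : SN R t)
    (hu : RedStar R t u) (hv : RedStar R t v) : Joinable R u v := by
  induction ht generalizing u v with
  | intro t _ ih =>
    obtain rfl | ⟨u₁, hu₁, hu⟩ := hu.cases_head
    · exact ⟨v, hv, .refl⟩
    obtain rfl | ⟨v₁, hv₁, hv⟩ := hv.cases_head
    · exact ⟨u, .refl, hu.head hu₁⟩
    obtain ⟨w, huw, hvw⟩ := hconf _ _ _ hu₁ hv₁
    obtain ⟨x, hux, hwx⟩ := ih _ hu₁ hu huw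
    obtain ⟨y, hvy, hxy⟩ := ih _ hv₁ hv (hvw.trans hwx)
    exact ⟨y, hux.trans hxy, hvy⟩

end Reduction

/-! # Metatheory of typing -/

section TypingMetatheory

open Trm

variable {F : Type} {R : Rules F} {Θ sΘ : F → Trm F}

theorem Typing.type_kind {Γ : List (Trm F)} {t T : Trm F} (h : Typing R Θ sΘ Γ t T) :
    Typing R Θ sΘ Γ .type .kind := by
  induction h with
  | ax => exact .ax
  | var hs hA ih => exact .weak hs hA ih
  | weak hs hA _ ih _ => exact .weak hs hA ih
  | prod _ _ _ ih _ => exact ih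
  | abs _ _ _ _ ih => exact ih
  | app _ _ ih _ => exact ih
  | conv _ _ _ _ ih _ => exact ih
  | symb _ _ _ ih => exact ih

theorem Typing.context_head {A : Trm F} {Γ : List (Trm F)} {t T : Trm F}
    (h : Typing R Θ sΘ (A :: Γ) t T) : ∃ s, IsSort s ∧ Typing R Θ sΘ Γ A s := by
  generalize hΔ : A :: Γ = Δ at h
  induction h with
  | ax => cases hΔ
  | var hs hA => cases hΔ; exact ⟨_, hs, hA⟩
  | weak hs hA => cases hΔ; exact ⟨_, hs, hA⟩
  | prod _ _ _ ih _ => exact ih hΔ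
  | abs _ _ _ _ ih => exact ih hΔ
  | app _ _ ih _ => exact ih hΔ
  | conv _ _ _ _ ih _ => exact ih hΔ
  | symb => cases hΔ

theorem up_eq_up_of_lt {σ τ : ℕ → Trm F} {n : ℕ} (h : ∀ i < n, σ i = τ i) :
    ∀ i < n + 1, up σ i = up τ i
  | 0, _ => rfl
  | i + 1, hi => by rw [up, up, h i (Nat.lt_of_succ_lt_succ hi)]

theorem Typing.subst_congr {Γ : List (Trm F)} {t T : Trm F} (h : Typing R Θ sΘ Γ t T)
    {σ τ : ℕ → Trm F} (hστ : ∀ i < Γ.length, σ i = τ i) : t.subst σ = t.subst τ := by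
  induction h generalizing σ τ with
  | ax => rfl
  | var => exact hστ 0 (Nat.succ_pos _)
  | weak _ _ _ _ ih =>
    rw [shift, subst_rename, subst_rename]
    exact ih fun i hi => hστ (i + 1) (Nat.succ_lt_succ hi)
  | prod _ _ _ ihA ihB => rw [subst, subst, ihA hστ, ihB (up_eq_up_of_lt hστ)]
  | abs _ _ _ ihb ihP =>
    obtain ⟨hA, -⟩ := pi.inj (ihP hστ)
    rw [subst, subst, hA, ihb (up_eq_up_of_lt hστ)]
  | app _ _ iht iha => rw [subst, subst, iht hστ, iha hστ]
  | conv _ _ _ _ ih _ => exact ih hστ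
  | symb => rfl

theorem Typing.subst_eq_of_nil {t T : Trm F} (h : Typing R Θ sΘ [] t T) (σ : ℕ → Trm F) :
    t.subst σ = t :=
  (h.subst_congr fun _ hi => absurd hi (Nat.not_lt_zero _)).trans (subst_var t)

theorem Typing.symb_of_typable_context {f : F} (hs : IsSort (sΘ f))
    (hf : Typing R Θ sΘ [] (Θ f) (sΘ f)) {Γ : List (Trm F)} (hΓ : Typing R Θ sΘ Γ .type .kind) :
    Typing R Θ sΘ Γ (.sym f) (Θ f) := by
  induction Γ with
  | nil => exact .symb f hs hf
  | cons A Γ ih =>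
    obtain ⟨s, hs', hA⟩ := hΓ.context_head
    have := Typing.weak hs' hA (ih hA.type_kind)
    rwa [shift, rename_eq_subst _ (Θ f), hf.subst_eq_of_nil] at this

theorem Typing.pi_domain {Γ : List (Trm F)} {A B T : Trm F} (h : Typing R Θ sΘ Γ (.pi A B) T) :
    Typing R Θ sΘ Γ A .type := by
  generalize ht : Trm.pi A B = t at h
  induction h generalizing A B with
  | @weak _ _ _ b _ hs hC _ _ ih =>
    cases b <;> cases ht
    exact .weak hs hC (ih rfl)
  | prod _ hA _ => cases ht; exact hA
  | conv _ _ _ _ ih _ => exact ih ht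
  | _ => cases ht

theorem substTyped_cons_iff {Ty : List (Trm F) → Trm F → Trm F → Prop} {Γ Δ : List (Trm F)}
    {σ : ℕ → Trm F} {A : Trm F} :
    SubstTyped Ty Γ σ (A :: Δ) ↔
      Ty Γ (σ 0) (A.subst fun i => σ (i + 1)) ∧ SubstTyped Ty Γ (fun i => σ (i + 1)) Δ := by
  refine ⟨fun h => ⟨h 0 A rfl, fun i B hB => h (i + 1) B hB⟩, ?_⟩
  rintro ⟨h₀, h⟩ (_ | i) B hB
  · cases hB; exact h₀
  · exact h i B hB

theorem SubstTyped.weaken {Γ Δ : List (Trm F)} {σ : ℕ → Trm F} {A s : Trm F}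
    (hσ : SubstTyped (Typing R Θ sΘ) Γ σ Δ) (hs : s.IsSort) (hA : Typing R Θ sΘ Γ A s) :
    SubstTyped (Typing R Θ sΘ) (A :: Γ) (fun i => (σ i).shift) Δ := by
  intro i B hB
  have := Typing.weak hs hA (hσ i B hB)
  rwa [shift, rename_subst] at this

theorem SubstTyped.up {Γ Δ : List (Trm F)} {σ : ℕ → Trm F} {A s : Trm F}
    (hσ : SubstTyped (Typing R Θ sΘ) Γ σ Δ) (hs : s.IsSort)
    (hA : Typing R Θ sΘ Γ (A.subst σ) s) :
    SubstTyped (Typing R Θ sΘ) (A.subst σ :: Γ) (up σ) (A :: Δ) := by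
  have h₀ := Typing.var hs hA
  rw [shift, rename_subst] at h₀
  exact substTyped_cons_iff.2 ⟨h₀, hσ.weaken hs hA⟩

theorem SubstTyped.id {Γ : List (Trm F)} (hΓ : Typing R Θ sΘ Γ .type .kind) :
    SubstTyped (Typing R Θ sΘ) Γ .var Γ := by
  induction Γ with
  | nil => intro i A h; simp at h
  | cons A Γ ih =>
    obtain ⟨s, hs, hA⟩ := hΓ.context_head
    have := (ih hA.type_kind).up hs ((subst_var A).symm ▸ hA)
    rwa [subst_var, up_var] at this

theorem Typing.subst {Γ Δ : List (Trm F)} {t T : Trm F} {σ : ℕ → Trm F}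
    (h : Typing R Θ sΘ Δ t T) (hΓ : Typing R Θ sΘ Γ .type .kind)
    (hσ : SubstTyped (Typing R Θ sΘ) Γ σ Δ) : Typing R Θ sΘ Γ (t.subst σ) (T.subst σ) := by
  induction h generalizing Γ σ with
  | ax => exact hΓ
  | var =>
    rw [shift, subst_rename]
    exact (substTyped_cons_iff.1 hσ).1
  | weak _ _ _ _ ihb =>
    simp only [shift, subst_rename]
    exact ihb hΓ (substTyped_cons_iff.1 hσ).2
  | prod hs _ _ ihA ihB =>
    have hA := ihA hΓ hσ
    have hB := ihB (.weak (.inl rfl) hA hΓ) (hσ.up (.inl rfl) hA)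
    rw [hs.subst_eq] at hB ⊢
    exact .prod hs hA hB
  | abs hs _ _ ihb ihP =>
    have hP := ihP hΓ hσ
    rw [hs.subst_eq] at hP
    have hA := hP.pi_domain
    exact .abs hs (ihb (.weak (.inl rfl) hA hΓ) (hσ.up (.inl rfl) hA)) hP
  | app _ _ iht iha =>
    have := Typing.app (iht hΓ hσ) (iha hΓ hσ)
    rwa [subst1_subst_up, ← subst_subst1] at this
  | conv _ hAB _ hs iha ihB =>
    exact .conv (iha hΓ hσ) (hAB.subst σ) (hs.subst_eq σ ▸ ihB hΓ hσ) hs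
  | symb f hs hf _ =>
    rw [hf.subst_eq_of_nil]
    exact .symb_of_typable_context hs hf hΓ

theorem Typing.subst1 {Γ : List (Trm F)} {A a t T : Trm F} (h : Typing R Θ sΘ (A :: Γ) t T)
    (ha : Typing R Θ sΘ Γ a A) :
    Typing R Θ sΘ Γ (Trm.subst1 a t) (Trm.subst1 a T) := by
  have ha' : Typing R Θ sΘ Γ a (A.subst .var) := by rwa [subst_var]
  exact h.subst ha.type_kind (substTyped_cons_iff.2 ⟨ha', SubstTyped.id ha.type_kind⟩)

theorem Typing.pi_codomain {Γ : List (Trm F)} {A B T : Trm F} (h : Typing R Θ sΘ Γ (.pi A B) T) :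
    ∃ s, IsSort s ∧ Typing R Θ sΘ (A :: Γ) B s := by
  generalize ht : Trm.pi A B = t at h
  induction h generalizing A B with
  | @weak Γ C s b D hs hC hb _ ih =>
    cases b <;> cases ht
    obtain ⟨s', hs', hB⟩ := ih rfl
    have hA := Typing.weak hs hC hb.pi_domain
    refine ⟨s', hs', ?_⟩
    simp only [shift, rename_eq_subst, ← up_comp_var] at hA ⊢
    have hshift := ((SubstTyped.id hC.type_kind).weaken hs hC).up (.inl rfl) hA
    exact hs'.subst_eq _ ▸ hB.subst (.weak (.inl rfl) hA hA.type_kind) hshift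
  | prod hs _ hB => cases ht; exact ⟨_, hs, hB⟩
  | conv _ _ _ _ ih _ => exact ih ht
  | _ => cases ht

theorem Typing.ne_kind {Γ : List (Trm F)} {t T : Trm F} (h : Typing R Θ sΘ Γ t T) :
    t ≠ .kind := by
  induction h with
  | weak _ _ _ _ ih => exact rename_eq_kind_iff.not.2 ih
  | conv _ _ _ _ ih _ => exact ih
  | _ => simp

theorem Typing.type_eq_kind_or_typable {Γ : List (Trm F)} {t T : Trm F}
    (h : Typing R Θ sΘ Γ t T) : T = .kind ∨ ∃ s, IsSort s ∧ Typing R Θ sΘ Γ T s := by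
  induction h with
  | ax => exact .inl rfl
  | var hs hA => exact .inr ⟨_, hs, hs.shift_eq ▸ .weak hs hA hA⟩
  | weak hs hA _ _ ih =>
    obtain rfl | ⟨s', hs', hB⟩ := ih
    · exact .inl rfl
    · exact .inr ⟨s', hs', hs'.shift_eq ▸ .weak hs hA hB⟩
  | prod hs hA =>
    obtain rfl | rfl := hs
    · exact .inr ⟨.kind, .inr rfl, hA.type_kind⟩
    · exact .inl rfl
  | abs hs _ hP => exact .inr ⟨_, hs, hP⟩
  | app _ ha ih _ =>
    obtain ⟨_, -, hP⟩ := ih.resolve_left (by simp)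
    obtain ⟨s', hs', hB⟩ := hP.pi_codomain
    exact .inr ⟨s', hs', hs'.subst_eq _ ▸ hB.subst1 ha⟩
  | conv _ _ hB hs => exact .inr ⟨_, hs, hB⟩
  | symb f hs hf => exact .inr ⟨_, hs, hf⟩

theorem Typing.pi_typable {Γ : List (Trm F)} {t A B : Trm F} (h : Typing R Θ sΘ Γ t (.pi A B)) :
    ∃ s, Typing R Θ sΘ Γ (.pi A B) s := by
  obtain ⟨s, -, hP⟩ := h.type_eq_kind_or_typable.resolve_left (by simp)
  exact ⟨s, hP⟩

theorem PresTyping.redStar (hpres : PresTyping R Θ sΘ) {Γ : List (Trm F)} {t u T : Trm F}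
    (h : Typing R Θ sΘ Γ t T) (htu : RedStar R t u) : Typing R Θ sΘ Γ u T := by
  induction htu with
  | refl => exact h
  | tail _ hr ih => exact hpres _ _ _ _ ih hr

theorem Typing.not_joinable_kind (hR : SymbolHeaded R) (hpres : PresTyping R Θ sΘ)
    {Γ : List (Trm F)} {B T : Trm F} (h : Typing R Θ sΘ Γ B T) : ¬ Joinable R .kind B := by
  rintro ⟨v, hv, hB⟩
  rw [(normalForm_of_isSort hR (.inr rfl)).eq_of_redStar hv] at hB
  exact (hpres.redStar h hB).ne_kind rfl

theorem Typing.isKind_iff (hR : SymbolHeaded R) (hpres : PresTyping R Θ sΘ)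
    {Γ : List (Trm F)} {t T : Trm F} (h : Typing R Θ sΘ Γ t T) : t.IsKind ↔ T = .kind := by
  induction h with
  | ax => exact iff_of_true trivial rfl
  | var _ hA => exact iff_of_false id (rename_eq_kind_iff.not.2 hA.ne_kind)
  | weak _ _ _ _ ih => exact (isKind_rename_iff _ _).trans (ih.trans rename_eq_kind_iff.symm)
  | prod _ _ _ _ ih => exact ih
  | abs => exact iff_of_false id (by simp)
  | app ht ha _ _ =>
    obtain ⟨_, hP⟩ := ht.pi_typable
    obtain ⟨_, _, hB⟩ := hP.pi_codomain
    exact iff_of_false id (hB.subst1 ha).ne_kind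
  | conv _ hAB hB _ ih _ =>
    refine iff_of_false (fun h => ?_) hB.ne_kind
    rw [ih.1 h] at hAB
    exact hB.not_joinable_kind hR hpres hAB
  | symb f _ hf => exact iff_of_false id hf.ne_kind

theorem Typing.isKindLike_iff (hR : SymbolHeaded R) (hpres : PresTyping R Θ sΘ)
    {Γ : List (Trm F)} {t T : Trm F} (h : Typing R Θ sΘ Γ t T) : IsKindLike t ↔ T = .kind :=
  (or_iff_left h.ne_kind).trans (h.isKind_iff hR hpres)

end TypingMetatheory

/-! # Computability predicates -/

section Computability

open Trm

variable {F : Type} {R : Rules F}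

theorem Neutral.app {t : Trm F} (h : Neutral R t) (a : Trm F) : Neutral R (.app t a) := by
  obtain ⟨A, b, c, vs, rfl⟩ | ⟨x, vs, rfl⟩ | ⟨f, vs, rfl, hf⟩ := h
  · exact .inl ⟨A, b, c, vs ++ [a], (appList_concat _ _ _).symm⟩
  · exact .inr (.inl ⟨x, vs ++ [a], (appList_concat _ _ _).symm⟩)
  · refine .inr (.inr ⟨f, vs ++ [a], (appList_concat _ _ _).symm, fun ls r h => ?_⟩)
    exact (hf ls r h).trans (by simp)

theorem Neutral.spine_cases {t : Trm F} (h : Neutral R t) :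
    (0 < t.spineLength ∧ ∃ A b, t.spineHead = .lam A b) ∨ (∃ x, t.spineHead = .var x) ∨
    ∃ f, t.spineHead = .sym f ∧
      ∀ ls r, (appList (.sym f) ls, r) ∈ R → ls.length ≤ t.spineLength := by
  obtain ⟨A, b, c, vs, rfl⟩ | ⟨x, vs, rfl⟩ | ⟨f, vs, rfl, hf⟩ := h
  · refine .inl ⟨?_, A, b, by rw [spineHead_appList]; rfl⟩
    rw [spineLength_appList, spineLength]
    omega
  · exact .inr (.inl ⟨x, by rw [spineHead_appList]; rfl⟩)
  · refine .inr (.inr ⟨f, by rw [spineHead_appList]; rfl, fun ls r h => ?_⟩)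
    rw [spineLength_appList]
    exact (hf ls r h).trans (Nat.le_add_left _ _)

theorem Neutral.ne_lam {t : Trm F} (h : Neutral R t) (A b : Trm F) : t ≠ .lam A b := by
  rintro rfl
  obtain ⟨h, -⟩ | ⟨x, h⟩ | ⟨f, h, -⟩ := h.spine_cases <;> simp [spineHead, spineLength] at h

theorem Neutral.ne_pi {t : Trm F} (h : Neutral R t) (A B : Trm F) : t ≠ .pi A B := by
  rintro rfl
  obtain ⟨-, _, _, h⟩ | ⟨x, h⟩ | ⟨f, h, -⟩ := h.spine_cases <;> simp [spineHead] at h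

theorem Neutral.length_le {t : Trm F} (h : Neutral R t) {f : F} (hf : t.spineHead = .sym f)
    {ls : List (Trm F)} {r : Trm F} (hlr : (appList (.sym f) ls, r) ∈ R) :
    ls.length ≤ t.spineLength := by
  obtain ⟨-, _, _, h⟩ | ⟨x, h⟩ | ⟨g, h, hg⟩ := h.spine_cases <;> rw [hf] at h <;> cases h
  exact hg ls r hlr

theorem Neutral.red_app (hR : SymbolHeaded R) {t a u : Trm F} (ht : Neutral R t)
    (h : Red R (.app t a) u) :
    (∃ t', u = .app t' a ∧ Red R t t') ∨ (∃ a', u = .app t a' ∧ Red R a a') := by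
  obtain ⟨A, b, rfl, -⟩ | ⟨f, ls, r, hlr, hf, hlength⟩ | h := h.app_inv hR
  · exact (ht.ne_lam A b rfl).elim
  · have := ht.length_le hf hlr
    omega
  · exact h

theorem isCompPred_SNset : IsCompPred R (SNset R) :=
  ⟨fun _ h => h, fun _ ht _ hu => Acc.inv ht hu, fun _ _ h => .intro _ h⟩

theorem IsCompPred.var_mem (hR : SymbolHeaded R) {S : Set (Trm F)} (hS : IsCompPred R S)
    (n : ℕ) : .var n ∈ S :=
  hS.2.2 _ (.inr (.inl ⟨n, [], rfl⟩)) fun u hu => (normalForm_var hR n u hu).elim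

theorem IsCompPred.redStar_mem {S : Set (Trm F)} (hS : IsCompPred R S) {t u : Trm F} (ht : t ∈ S)
    (h : RedStar R t u) : u ∈ S := by
  induction h with
  | refl => exact ht
  | tail _ h ih => exact hS.2.1 _ ih _ h

theorem SN.redStar {t u : Trm F} (ht : SN R t) (h : RedStar R t u) : SN R u :=
  isCompPred_SNset.redStar_mem ht h

/-- The dependent product `{t | ∀ a ∈ P, t a ∈ Q a}` of a family of sets of terms, by which
product types are interpreted. -/
def piSet (P : Set (Trm F)) (Q : Trm F → Set (Trm F)) : Set (Trm F) :=
  {t | ∀ a ∈ P, .app t a ∈ Q a}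

theorem piSet_congr {P : Set (Trm F)} {Q Q' : Trm F → Set (Trm F)} (h : ∀ a ∈ P, Q a = Q' a) :
    piSet P Q = piSet P Q' :=
  Set.ext fun t => forall₂_congr fun a ha => by rw [h a ha]

theorem IsCompPred.piSet (hR : SymbolHeaded R) {P : Set (Trm F)} {Q : Trm F → Set (Trm F)}
    (hP : IsCompPred R P) (hQ : ∀ a ∈ P, IsCompPred R (Q a))
    (hred : ∀ a ∈ P, ∀ a', Red R a a' → Q a' ⊆ Q a) : IsCompPred R (piSet P Q) := by
  refine ⟨fun t ht => ?_, fun t ht u hu a ha => (hQ a ha).2.1 _ (ht a ha) _ (.appL hu),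
    fun t hn ht a ha => ?_⟩
  · have hx := hP.var_mem hR 0
    exact SN.of_map .appL ((hQ _ hx).1 (ht _ hx))
  · have ha_sn : SN R a := hP.1 ha
    induction ha_sn with
    | intro a _ ih =>
      refine (hQ a ha).2.2 _ (hn.app a) fun u hu => ?_
      obtain ⟨t', rfl, h⟩ | ⟨a', rfl, h⟩ := hn.red_app hR hu
      · exact ht t' h a ha
      · exact hred a ha a' h (ih a' h (hP.2.1 _ ha _ h))

theorem IsCompPred.beta_expand (hR : SymbolHeaded R) {S : Set (Trm F)} (hS : IsCompPred R S)
    {A b a : Trm F} (hA : SN R A) (hb : SN R b) (ha : SN R a) (hba : subst1 a b ∈ S) :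
    .app (.lam A b) a ∈ S := by
  induction hA generalizing b a with
  | intro A _ ihA =>
    induction hb generalizing a with
    | intro b hb ihb =>
      induction ha with
      | intro a ha iha =>
        refine hS.2.2 _ (.inl ⟨A, b, a, [], rfl⟩) fun u hu => ?_
        obtain ⟨A', b', hlam, rfl⟩ | ⟨f, ls, r, -, hf, -⟩ | ⟨t', rfl, h⟩ | ⟨a', rfl, h⟩ :=
          hu.app_inv hR
        · cases hlam; exact hba
        · cases hf
        · obtain ⟨A', rfl, hA'⟩ | ⟨b', rfl, hb'⟩ := h.lam_inv hR
          · exact ihA A' hA' (.intro _ hb) (.intro _ ha) hba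
          · exact ihb b' hb' (.intro _ ha) (hS.2.1 _ hba _ (hb'.subst _))
        · exact iha a' h (hS.redStar_mem hba (RedStar.subst1_left (.single h) b))

theorem IsCompPred.lam_mem_piSet (hR : SymbolHeaded R) {P : Set (Trm F)}
    {Q : Trm F → Set (Trm F)} (hP : IsCompPred R P) (hQ : ∀ a ∈ P, IsCompPred R (Q a))
    {A b : Trm F} (hA : SN R A) (hb : ∀ a ∈ P, subst1 a b ∈ Q a) :
    .lam A b ∈ _root_.piSet P Q := by
  have hx := hP.var_mem hR 0
  have hb_sn : SN R b := SN.of_map (·.subst _) ((hQ _ hx).1 (hb _ hx))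
  exact fun a ha => (hQ a ha).beta_expand hR hA hb_sn (hP.1 ha) (hb a ha)

end Computability

/-! # The least fixpoint -/

section Fixpoint

open Trm

variable {F : Type} {R : Rules F} {I : Interp F}

/-- `Πx:A.B` is a normal form of `T`. -/
def NormalPi (R : Rules F) (T A B : Trm F) : Prop :=
  RedStar R T (.pi A B) ∧ NormalForm R (.pi A B)

theorem normalPi_eq_of_redStar (hconf : LocallyConfluent R) {T T' : Trm F} (hT : SN R T)
    (h : RedStar R T T') : NormalPi R T' = NormalPi R T := by
  funext A B
  refine propext ⟨fun ⟨h', hn⟩ => ⟨h.trans h', hn⟩, fun ⟨h', hn⟩ => ⟨?_, hn⟩⟩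
  obtain ⟨v, hv, hv'⟩ := hT.joinable_of_redStar hconf h h'
  rwa [hn.eq_of_redStar hv'] at hv

open Classical in
/-- The value of the partial function `F(I)` at `T`, extended to the terms `T ∉ D(I)`. -/
noncomputable def interpVal (R : Rules F) (I : Interp F) (T : Trm F) : Set (Trm F) :=
  if h : ∃ A B, NormalPi R T A B then piPart I h.choose h.choose_spec.choose else SNset R

/-- The partial function with domain `D` that maps `T` to `V T`. -/
def Interp.res (V : Trm F → Set (Trm F)) (D : Set (Trm F)) : Interp F := PFun.res V D

theorem Interp.mem_res {V : Trm F → Set (Trm F)} {D : Set (Trm F)} {T : Trm F}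
    {S : Set (Trm F)} : S ∈ Interp.res V D T ↔ T ∈ D ∧ V T = S :=
  PFun.mem_res V D T S

theorem interpF_eq_res : interpF R I = Interp.res (interpVal R I) (domD R I) := rfl

theorem interpVal_cases (R : Rules F) (T : Trm F) :
    ((∀ A B, ¬ NormalPi R T A B) ∧ ∀ I, interpVal R I T = SNset R) ∨
    ∃ A B, NormalPi R T A B ∧ ∀ I, interpVal R I T = piPart I A B := by
  by_cases h : ∃ A B, NormalPi R T A B
  · exact .inr ⟨_, _, h.choose_spec.choose_spec, fun I => dif_pos h⟩
  · exact .inl ⟨fun A B hAB => h ⟨A, B, hAB⟩, fun I => dif_neg h⟩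

open Classical in
theorem interpVal_redStar (hconf : LocallyConfluent R) {T T' : Trm F} (hT : SN R T)
    (h : RedStar R T T') : interpVal R I T' = interpVal R I T :=
  congrArg (fun P : Trm F → Trm F → Prop =>
    if h : ∃ A B, P A B then piPart I h.choose h.choose_spec.choose else SNset R)
    (normalPi_eq_of_redStar hconf hT h)

section Res

variable {V : Trm F → Set (Trm F)} {D : Set (Trm F)}

theorem partMem_res {T : Trm F} (hT : T ∈ D) : partMem (Interp.res V D) T = V T := by
  ext t
  simp [partMem, Interp.mem_res, hT]

theorem mem_domD_res {T : Trm F} :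
    T ∈ domD R (Interp.res V D) ↔ SN R T ∧ ∀ A B, RedStar R T (.pi A B) →
      A ∈ D ∧ ∀ a ∈ V A, subst1 a B ∈ D := by
  refine and_congr_right fun _ => forall₂_congr fun A B => imp_congr_right fun _ =>
    and_congr_right fun (hA : A ∈ D) => ?_
  change (∀ S ∈ Interp.res V D A, ∀ a ∈ S, subst1 a B ∈ D) ↔ _
  simp [Interp.mem_res, hA]

theorem piPart_res {A B : Trm F} (hA : A ∈ D) (hB : ∀ a ∈ V A, subst1 a B ∈ D) :
    piPart (Interp.res V D) A B = piSet (V A) fun a => V (subst1 a B) := by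
  ext t
  simp +contextual [piPart, piSet, Interp.mem_res, hA, hB]

end Res

theorem partMem_eq_interpVal (hI : interpF R I = I) {T : Trm F} (hT : T ∈ domD R I) :
    partMem I T = interpVal R I T := by
  conv_lhs => rw [← hI, interpF_eq_res]
  exact partMem_res hT

theorem eq_res_of_fixpoint (hI : interpF R I = I) : I = Interp.res (partMem I) (domD R I) := by
  refine hI.symm.trans (funext fun T => Part.ext fun S => ?_)
  rw [interpF_eq_res, Interp.mem_res, Interp.mem_res]
  exact and_congr_right fun hT => by rw [partMem_eq_interpVal hI hT]

theorem mem_domD_iff (hI : interpF R I = I) {T : Trm F} :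
    T ∈ domD R I ↔ SN R T ∧ ∀ A B, RedStar R T (.pi A B) →
      A ∈ domD R I ∧ ∀ a ∈ partMem I A, subst1 a B ∈ domD R I := by
  conv_lhs => rw [eq_res_of_fixpoint hI]
  exact mem_domD_res

theorem piPart_eq_piSet (hI : interpF R I = I) {A B : Trm F} (hA : A ∈ domD R I)
    (hB : ∀ a ∈ partMem I A, subst1 a B ∈ domD R I) :
    piPart I A B = piSet (partMem I A) fun a => partMem I (subst1 a B) := by
  conv_lhs => rw [eq_res_of_fixpoint hI]
  exact piPart_res hA hB

theorem domD_redStar (hI : interpF R I = I) {T T' : Trm F} (hT : T ∈ domD R I)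
    (h : RedStar R T T') : T' ∈ domD R I := by
  rw [mem_domD_iff hI] at *
  exact ⟨hT.1.redStar h, fun A B h' => hT.2 A B (h.trans h')⟩

theorem partMem_redStar (hconf : LocallyConfluent R) (hI : interpF R I = I) {T T' : Trm F}
    (hT : T ∈ domD R I) (h : RedStar R T T') : partMem I T' = partMem I T := by
  rw [partMem_eq_interpVal hI hT, partMem_eq_interpVal hI (domD_redStar hI hT h),
    interpVal_redStar hconf hT.1 h]

theorem partMem_pi (hR : SymbolHeaded R) (hconf : LocallyConfluent R) (hI : interpF R I = I)
    {A B : Trm F} (h : .pi A B ∈ domD R I) :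
    partMem I (.pi A B) = piSet (partMem I A) fun a => partMem I (subst1 a B) := by
  obtain ⟨C, hC, hn⟩ := h.1.exists_normalForm
  obtain ⟨A', B', rfl, -, -⟩ := hC.pi_inv hR
  obtain ⟨hnone, -⟩ | ⟨A'', B'', ⟨hr, -⟩, hval⟩ := interpVal_cases R (.pi A B)
  · exact (hnone A' B' ⟨hC, hn⟩).elim
  obtain ⟨_, _, ⟨⟩, hrA, hrB⟩ := hr.pi_inv hR
  obtain ⟨hA, hB⟩ := ((mem_domD_iff hI).1 h).2 A B .refl
  obtain ⟨hA'', hB''⟩ := ((mem_domD_iff hI).1 h).2 A'' B'' hr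
  rw [partMem_eq_interpVal hI h, hval, piPart_eq_piSet hI hA'' hB'',
    partMem_redStar hconf hI hA hrA]
  exact piSet_congr fun a ha => partMem_redStar hconf hI (hB a ha) (hrB.subst _)

/-- The inductively generated part of the domain of a fixpoint `I`: the closure condition of
`mem_domD_iff`, read as an inductive definition. -/
inductive InductiveDom (R : Rules F) (I : Interp F) : Trm F → Prop
  | intro {T : Trm F} (hT : SN R T)
      (hdom : ∀ A B, RedStar R T (.pi A B) → InductiveDom R I A)
      (hcod : ∀ A B, RedStar R T (.pi A B) → ∀ a ∈ partMem I A, InductiveDom R I (subst1 a B)) :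
      InductiveDom R I T

theorem inductiveDom_iff {T : Trm F} :
    InductiveDom R I T ↔ SN R T ∧ ∀ A B, RedStar R T (.pi A B) →
      InductiveDom R I A ∧ ∀ a ∈ partMem I A, InductiveDom R I (subst1 a B) :=
  ⟨fun ⟨hT, hdom, hcod⟩ => ⟨hT, fun A B h => ⟨hdom A B h, hcod A B h⟩⟩,
    fun ⟨hT, h⟩ => ⟨hT, fun A B hr => (h A B hr).1, fun A B hr => (h A B hr).2⟩⟩

theorem InductiveDom.mem_domD (hI : interpF R I = I) {T : Trm F} (h : InductiveDom R I T) :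
    T ∈ domD R I := by
  induction h with
  | intro hT _ _ ihdom ihcod =>
    exact (mem_domD_iff hI).2 ⟨hT, fun A B hr => ⟨ihdom A B hr, ihcod A B hr⟩⟩

theorem interpF_res_inductiveDom (hI : interpF R I = I) :
    interpF R (Interp.res (partMem I) {T | InductiveDom R I T}) =
      Interp.res (partMem I) {T | InductiveDom R I T} := by
  refine interpF_eq_res.trans (funext fun T => Part.ext fun S => ?_)
  rw [Interp.mem_res, Interp.mem_res, mem_domD_res]
  refine (and_congr_left' inductiveDom_iff.symm).trans (and_congr_right fun hT => ?_)
  rw [partMem_eq_interpVal hI (hT.mem_domD hI)]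
  obtain ⟨-, hval⟩ | ⟨A, B, ⟨hr, -⟩, hval⟩ := interpVal_cases R T
  · rw [hval, hval]
  · obtain ⟨hA, hB⟩ := (inductiveDom_iff.1 hT).2 A B hr
    rw [hval, hval, piPart_res (D := {T | InductiveDom R I T}) hA hB,
      piPart_eq_piSet hI (hA.mem_domD hI) fun a ha => (hB a ha).mem_domD hI]

theorem IsLfpInterp.inductiveDom (hlfp : IsLfpInterp (interpF R) I) {T : Trm F}
    (hT : T ∈ domD R I) : InductiveDom R I T := by
  have hmem : partMem I T ∈ I T := by
    rw [eq_res_of_fixpoint hlfp.1]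
    exact (Interp.mem_res).2 ⟨hT, by rw [← eq_res_of_fixpoint hlfp.1]⟩
  exact ((Interp.mem_res).1 (hlfp.2 _ (interpF_res_inductiveDom hlfp.1) T _ hmem)).1

theorem isCompPred_partMem (hR : SymbolHeaded R) (hconf : LocallyConfluent R)
    (hlfp : IsLfpInterp (interpF R) I) {T : Trm F} (hT : T ∈ domD R I) :
    IsCompPred R (partMem I T) := by
  have hI := hlfp.1
  induction hlfp.inductiveDom hT with
  | @intro T _ _ _ ihdom ihcod =>
    rw [partMem_eq_interpVal hI hT]
    obtain ⟨-, hval⟩ | ⟨A, B, ⟨hr, -⟩, hval⟩ := interpVal_cases R T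
    · rw [hval]
      exact isCompPred_SNset
    · obtain ⟨hA, hB⟩ := ((mem_domD_iff hI).1 hT).2 A B hr
      rw [hval, piPart_eq_piSet hI hA hB]
      refine .piSet hR (ihdom A B hr hA) (fun a ha => ihcod A B hr a ha (hB a ha))
        fun a ha a' h => ?_
      rw [partMem_redStar hconf hI (hB a ha) (RedStar.subst1_left (.single h) B)]

theorem isCompPred_domD (hI : interpF R I = I) : IsCompPred R (domD R I) := by
  refine ⟨fun T hT => hT.1, fun T hT U h => domD_redStar hI hT (.single h), fun T hn h => ?_⟩
  refine (mem_domD_iff hI).2 ⟨.intro _ fun U hU => (h U hU).1, fun A B hr => ?_⟩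
  obtain rfl | ⟨U, hU, hr⟩ := hr.cases_head
  · exact (hn.ne_pi A B rfl).elim
  · exact ((mem_domD_iff hI).1 (h U hU)).2 A B hr

theorem mem_domD_of_isSort (hR : SymbolHeaded R) {s : Trm F} (hs : s.IsSort) :
    s ∈ domD R I := by
  have hn := normalForm_of_isSort hR hs
  refine ⟨hn.sn, fun A B hr => ?_⟩
  obtain rfl := hn.eq_of_redStar hr
  simp [IsSort] at hs

theorem pi_mem_domD (hR : SymbolHeaded R) (hconf : LocallyConfluent R)
    (hlfp : IsLfpInterp (interpF R) I) {A B : Trm F} (hA : A ∈ domD R I)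
    (hB : ∀ a ∈ partMem I A, subst1 a B ∈ domD R I) : .pi A B ∈ domD R I := by
  have hI := hlfp.1
  have hx := (isCompPred_partMem hR hconf hlfp hA).var_mem hR 0
  have hB_sn : SN R B := SN.of_map (·.subst _) (hB _ hx).1
  refine (mem_domD_iff hI).2 ⟨hA.1.pi hR hB_sn, fun A' B' hr => ?_⟩
  obtain ⟨_, _, ⟨⟩, hrA, hrB⟩ := hr.pi_inv hR
  refine ⟨domD_redStar hI hA hrA, fun a ha => ?_⟩
  rw [partMem_redStar hconf hI hA hrA] at ha
  exact domD_redStar hI (hB a ha) (hrB.subst _)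

end Fixpoint

/-! # Interpretation of types -/

section Interpretation

open Trm

variable {F : Type} {R : Rules F} {Θ sΘ : F → Trm F} {I : Interp F}

open Classical in
theorem interp_of_not_isKindLike {T : Trm F} (hT : ¬ IsKindLike T) (σ : ℕ → Trm F) :
    interp R I T σ = if T.subst σ ∈ domD R I then partMem I (T.subst σ) else SNset R := by
  cases T with
  | type => exact (hT (.inl trivial)).elim
  | kind => exact (hT (.inr rfl)).elim
  | pi A B => rw [interp, if_neg (isKindLike_pi.not.1 hT)]
  | _ => rw [interp]

theorem interp_eq_partMem {T : Trm F} (hT : ¬ IsKindLike T) {σ : ℕ → Trm F}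
    (hσ : T.subst σ ∈ domD R I) : interp R I T σ = partMem I (T.subst σ) := by
  rw [interp_of_not_isKindLike hT, if_pos hσ]

theorem interp_of_isSort {s : Trm F} (hs : s.IsSort) (σ : ℕ → Trm F) :
    interp R I s σ = domD R I := by
  obtain rfl | rfl := hs <;> rw [interp]

theorem interp_pi_of_isKind {B : Trm F} (hB : B.IsKind) (A : Trm F) (σ : ℕ → Trm F) :
    interp R I (.pi A B) σ = piSet (interp R I A σ) fun a => interp R I B (scons a σ) := by
  rw [interp, if_pos hB, piSet]

theorem interp_subst (T : Trm F) {τ : ℕ → Trm F} (hτ : ∀ i, ¬ IsKindLike (τ i))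
    (σ : ℕ → Trm F) :
    interp R I (T.subst τ) σ = interp R I T (fun i => (τ i).subst σ) := by
  induction T generalizing τ σ with
  | type | kind => rfl
  | var n =>
    rw [interp_of_not_isKindLike (not_isKindLike_var n), Trm.subst,
      interp_of_not_isKindLike (hτ n)]
    rfl
  | pi A B ihA ihB =>
    have hk : IsKind (B.subst (up τ)) ↔ IsKind B := isKind_subst_iff (not_isKindLike_up hτ) B
    by_cases hB : B.IsKind
    · rw [Trm.subst, interp_pi_of_isKind (hk.2 hB), interp_pi_of_isKind hB, ihA hτ]
      simp only [ihB (not_isKindLike_up hτ), subst_scons_comp_up]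
    · rw [interp_of_not_isKindLike (isKindLike_pi.not.2 hB),
        interp_of_not_isKindLike (T := (Trm.pi A B).subst τ)
          (isKindLike_pi.not.2 (hk.not.2 hB)), subst_subst]
  | _ =>
    rw [interp_of_not_isKindLike (by simp [IsKindLike, IsKind, Trm.subst]),
      interp_of_not_isKindLike (by simp [IsKindLike, IsKind]), subst_subst]

theorem interp_shift (T : Trm F) (σ : ℕ → Trm F) :
    interp R I T.shift σ = interp R I T (fun i => σ (i + 1)) := by
  rw [shift, rename_eq_subst, interp_subst _ fun i => not_isKindLike_var _]
  rfl

theorem interp_subst1 {a : Trm F} (ha : ¬ IsKindLike a) (B : Trm F) (σ : ℕ → Trm F) :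
    interp R I (subst1 a B) σ = interp R I B (scons (a.subst σ) σ) := by
  have hτ : ∀ i, ¬ IsKindLike (scons a Trm.var i)
    | 0 => ha
    | n + 1 => not_isKindLike_var n
  rw [subst1, interp_subst _ hτ, subst_comp_scons]
  rfl

theorem interp_congr_of_nil {T U : Trm F} (h : Typing R Θ sΘ [] T U) (σ τ : ℕ → Trm F) :
    interp R I T σ = interp R I T τ := by
  -- `T` is its own instance under the substitution by a closed term, which absorbs `σ` and `τ`.
  have hclosed (ρ : ℕ → Trm F) : interp R I T ρ = interp R I T fun _ => .lam .type .type := by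
    conv_lhs => rw [← h.subst_eq_of_nil fun _ => .lam .type .type]
    exact interp_subst T (fun _ => by simp [IsKindLike, IsKind]) ρ
  rw [hclosed σ, hclosed τ]

theorem pi_subst_mem_domD (hI : interpF R I = I) {A B : Trm F} {σ : ℕ → Trm F}
    (h : (Trm.pi A B).subst σ ∈ domD R I) :
    A.subst σ ∈ domD R I ∧ ∀ a ∈ partMem I (A.subst σ), B.subst (scons a σ) ∈ domD R I := by
  have := ((mem_domD_iff hI).1 h).2 _ _ .refl
  simpa only [subst1_subst_up] using this

theorem Typing.not_isKindLike_of_type (hR : SymbolHeaded R) (hpres : PresTyping R Θ sΘ)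
    {Γ : List (Trm F)} {A : Trm F} (h : Typing R Θ sΘ Γ A .type) : ¬ IsKindLike A := by
  simp [h.isKindLike_iff hR hpres]

theorem codomain_subst_mem_domD (hR : SymbolHeaded R) (hpres : PresTyping R Θ sΘ)
    (hI : interpF R I = I) {Γ : List (Trm F)} {A B T : Trm F}
    (hP : Typing R Θ sΘ Γ (.pi A B) T) {σ : ℕ → Trm F}
    (hσ : (Trm.pi A B).subst σ ∈ domD R I) {a : Trm F} (ha : a ∈ interp R I A σ) :
    B.subst (scons a σ) ∈ domD R I := by
  obtain ⟨hAσ, hBσ⟩ := pi_subst_mem_domD hI hσ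
  rw [interp_eq_partMem (hP.pi_domain.not_isKindLike_of_type hR hpres) hAσ] at ha
  exact hBσ a ha

theorem interp_pi (hR : SymbolHeaded R) (hconf : LocallyConfluent R)
    (hpres : PresTyping R Θ sΘ) (hI : interpF R I = I) {Γ : List (Trm F)} {A B T : Trm F}
    (hP : Typing R Θ sΘ Γ (.pi A B) T) {σ : ℕ → Trm F}
    (hσ : (Trm.pi A B).subst σ ∈ domD R I) :
    interp R I (.pi A B) σ = piSet (interp R I A σ) fun a => interp R I B (scons a σ) := by
  by_cases hB : B.IsKind
  · exact interp_pi_of_isKind hB A σ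
  obtain ⟨hAσ, hBσ⟩ := pi_subst_mem_domD hI hσ
  obtain ⟨s, -, hBs⟩ := hP.pi_codomain
  rw [interp_eq_partMem (isKindLike_pi.not.2 hB) hσ,
    interp_eq_partMem (hP.pi_domain.not_isKindLike_of_type hR hpres) hAσ]
  refine (partMem_pi hR hconf hI hσ).trans (piSet_congr fun a ha => ?_)
  rw [subst1_subst_up, interp_eq_partMem (not_or.2 ⟨hB, hBs.ne_kind⟩) (hBσ a ha)]

theorem interp_redStar (hR : SymbolHeaded R) (hconf : LocallyConfluent R)
    (hpres : PresTyping R Θ sΘ) (hI : interpF R I = I) {Γ : List (Trm F)} {U U' T : Trm F}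
    (h : Typing R Θ sΘ Γ U T) (hU : RedStar R U U') {σ τ : ℕ → Trm F}
    (hσ : U.subst σ ∈ domD R I) (hστ : ∀ i, RedStar R (σ i) (τ i)) :
    interp R I U' τ = interp R I U σ := by
  have h' := hpres.redStar h hU
  have hred := hU.subst_pointwise hστ
  have hτ := domD_redStar hI hσ hred
  induction U generalizing Γ T U' σ τ with
  | type =>
    rw [(normalForm_of_isSort hR (.inl rfl)).eq_of_redStar hU]
    rfl
  | kind => exact (h.ne_kind rfl).elim
  | pi A B ihA ihB =>
    obtain ⟨A', B', rfl, hA, hB⟩ := hU.pi_inv hR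
    obtain ⟨s, -, hBs⟩ := h.pi_codomain
    have hAσ := (pi_subst_mem_domD hI hσ).1
    have hdom : interp R I A' τ = interp R I A σ :=
      ihA h.pi_domain hA hAσ hστ h'.pi_domain (hA.subst_pointwise hστ)
        (pi_subst_mem_domD hI hτ).1
    rw [interp_pi hR hconf hpres hI h hσ, interp_pi hR hconf hpres hI h' hτ, hdom]
    refine piSet_congr fun a ha => ?_
    have hBσ := codomain_subst_mem_domD hR hpres hI h hσ ha
    have hscons := redStar_scons (.refl (a := a)) hστ
    exact ihB hBs hB hBσ hscons (hpres.redStar hBs hB) (hB.subst_pointwise hscons)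
      (domD_redStar hI hBσ (hB.subst_pointwise hscons))
  | _ =>
    have hk := h.isKindLike_iff hR hpres
    have hk' := h'.isKindLike_iff hR hpres
    rw [interp_eq_partMem (hk'.not.2 (hk.not.1 (by simp [IsKindLike, IsKind]))) hτ,
      interp_eq_partMem (by simp [IsKindLike, IsKind]) hσ, partMem_redStar hconf hI hσ hred]

theorem isCompPred_interp (hR : SymbolHeaded R) (hconf : LocallyConfluent R)
    (hpres : PresTyping R Θ sΘ) (hlfp : IsLfpInterp (interpF R) I) {Γ : List (Trm F)}
    {U T : Trm F} (h : Typing R Θ sΘ Γ U T) {σ : ℕ → Trm F} (hσ : U.subst σ ∈ domD R I) :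
    IsCompPred R (interp R I U σ) := by
  have hI := hlfp.1
  induction U generalizing Γ T σ with
  | type | kind => rw [interp]; exact isCompPred_domD hI
  | pi A B ihA ihB =>
    obtain ⟨s, -, hB⟩ := h.pi_codomain
    have hBσ {a : Trm F} := codomain_subst_mem_domD hR hpres hI h hσ (a := a)
    rw [interp_pi hR hconf hpres hI h hσ]
    refine .piSet hR (ihA h.pi_domain (pi_subst_mem_domD hI hσ).1)
      (fun a ha => ihB hB (hBσ ha)) fun a ha a' hr => ?_
    rw [interp_redStar hR hconf hpres hI hB .refl (hBσ ha)
      (redStar_scons (.single hr) fun _ => .refl)]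
  | _ =>
    rw [interp_eq_partMem (by simp [IsKindLike, IsKind]) hσ]
    exact isCompPred_partMem hR hconf hlfp hσ

theorem models_cons_iff {Γ : List (Trm F)} {A : Trm F} {σ : ℕ → Trm F} :
    Models R I σ (A :: Γ) ↔
      σ 0 ∈ interp R I A (fun i => σ (i + 1)) ∧ Models R I (fun i => σ (i + 1)) Γ := by
  refine ⟨fun h => ⟨h 0 A rfl, fun i B hB => h (i + 1) B hB⟩, ?_⟩
  rintro ⟨h₀, h⟩ (_ | i) B hB
  · cases hB; exact h₀
  · exact h i B hB

end Interpretation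

/-! # Soundness of typing -/

section Soundness

open Trm

variable {F : Type} {R : Rules F} {Θ sΘ : F → Trm F} {I : Interp F} {Γ : List (Trm F)}

/-- The semantic judgment `Γ ⊨ t : T`: every `σ ⊨ Γ` satisfies `tσ ∈ ⟦T⟧σ` and moreover
`Tσ ∈ 𝒟`, so that `⟦T⟧σ` is not the default value `SN`. -/
def Valid (R : Rules F) (I : Interp F) (Γ : List (Trm F)) (t T : Trm F) : Prop :=
  ∀ σ, Models R I σ Γ → t.subst σ ∈ interp R I T σ ∧ T.subst σ ∈ domD R I

theorem Valid.subst_mem_domD {T s : Trm F} (h : Valid R I Γ T s) (hs : s.IsSort)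
    {σ : ℕ → Trm F} (hσ : Models R I σ Γ) : T.subst σ ∈ domD R I := by
  simpa only [interp_of_isSort hs] using (h σ hσ).1

theorem Valid.type_kind (hR : SymbolHeaded R) : Valid R I Γ .type .kind := by
  intro σ _
  rw [interp_of_isSort (.inr rfl)]
  exact ⟨mem_domD_of_isSort hR (.inl rfl), mem_domD_of_isSort hR (.inr rfl)⟩

theorem Valid.var_zero {A s : Trm F} (hs : s.IsSort) (hA : Valid R I Γ A s) :
    Valid R I (A :: Γ) (.var 0) A.shift := by
  intro σ hσ
  obtain ⟨h₀, hσ'⟩ := models_cons_iff.1 hσ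
  rw [interp_shift, shift, subst_rename]
  exact ⟨h₀, hA.subst_mem_domD hs hσ'⟩

theorem Valid.weaken {b B : Trm F} (hb : Valid R I Γ b B) (A : Trm F) :
    Valid R I (A :: Γ) b.shift B.shift := by
  intro σ hσ
  rw [interp_shift]
  simp only [shift, subst_rename]
  exact hb _ (models_cons_iff.1 hσ).2

theorem Valid.pi (hR : SymbolHeaded R) (hconf : LocallyConfluent R)
    (hlfp : IsLfpInterp (interpF R) I) {A B s : Trm F} (hA' : ¬ IsKindLike A)
    (hs : s.IsSort) (hA : Valid R I Γ A .type) (hB : Valid R I (A :: Γ) B s) :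
    Valid R I Γ (.pi A B) s := by
  intro σ hσ
  have hAσ := hA.subst_mem_domD (.inl rfl) hσ
  rw [interp_of_isSort hs, hs.subst_eq]
  refine ⟨pi_mem_domD hR hconf hlfp hAσ fun a ha => ?_, mem_domD_of_isSort hR hs⟩
  rw [← interp_eq_partMem hA' hAσ] at ha
  rw [subst1_subst_up]
  exact hB.subst_mem_domD hs (models_cons_iff.2 ⟨ha, hσ⟩)

theorem Valid.lam (hR : SymbolHeaded R) (hconf : LocallyConfluent R) (hpres : PresTyping R Θ sΘ)
    (hlfp : IsLfpInterp (interpF R) I) {A B b s : Trm F}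
    (hP' : Typing R Θ sΘ Γ (.pi A B) s) (hs : s.IsSort) (hP : Valid R I Γ (.pi A B) s)
    (hb : Valid R I (A :: Γ) b B) : Valid R I Γ (.lam A b) (.pi A B) := by
  intro σ hσ
  have hI := hlfp.1
  have hPσ := hP.subst_mem_domD hs hσ
  have hAσ := (pi_subst_mem_domD hI hPσ).1
  obtain ⟨_, -, hB'⟩ := hP'.pi_codomain
  rw [interp_pi hR hconf hpres hI hP' hPσ]
  refine ⟨IsCompPred.lam_mem_piSet hR
    (isCompPred_interp hR hconf hpres hlfp hP'.pi_domain hAσ)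
    (fun a ha => isCompPred_interp hR hconf hpres hlfp hB'
      (codomain_subst_mem_domD hR hpres hI hP' hPσ ha)) hAσ.1 fun a ha => ?_, hPσ⟩
  rw [subst1_subst_up]
  exact (hb _ (models_cons_iff.2 ⟨ha, hσ⟩)).1

theorem Valid.app (hR : SymbolHeaded R) (hconf : LocallyConfluent R) (hpres : PresTyping R Θ sΘ)
    (hI : interpF R I = I) {A B t a T : Trm F} (hP : Typing R Θ sΘ Γ (.pi A B) T)
    (ha' : ¬ IsKindLike a) (ht : Valid R I Γ t (.pi A B)) (ha : Valid R I Γ a A) :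
    Valid R I Γ (.app t a) (subst1 a B) := by
  intro σ hσ
  obtain ⟨htσ, hPσ⟩ := ht σ hσ
  have haσ := (ha σ hσ).1
  rw [interp_pi hR hconf hpres hI hP hPσ] at htσ
  rw [interp_subst1 ha', subst_subst1]
  exact ⟨htσ _ haσ, codomain_subst_mem_domD hR hpres hI hP hPσ haσ⟩

theorem Valid.conv (hR : SymbolHeaded R) (hconf : LocallyConfluent R)
    (hpres : PresTyping R Θ sΘ) (hI : interpF R I = I) {A B a s s' : Trm F}
    (hA' : Typing R Θ sΘ Γ A s') (hB' : Typing R Θ sΘ Γ B s) (hs : s.IsSort)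
    (hAB : Joinable R A B) (ha : Valid R I Γ a A) (hB : Valid R I Γ B s) :
    Valid R I Γ a B := by
  intro σ hσ
  obtain ⟨haσ, hAσ⟩ := ha σ hσ
  have hBσ := hB.subst_mem_domD hs hσ
  obtain ⟨C, hAC, hBC⟩ := hAB
  have hinterp : interp R I A σ = interp R I B σ :=
    (interp_redStar hR hconf hpres hI hA' hAC hAσ fun _ => .refl).symm.trans
      (interp_redStar hR hconf hpres hI hB' hBC hBσ fun _ => .refl)
  exact ⟨hinterp ▸ haσ, hBσ⟩

theorem Valid.sym (hadeq : Adequate R Θ sΘ I) {f : F} (hs : (sΘ f).IsSort)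
    (hf : Typing R Θ sΘ [] (Θ f) (sΘ f)) (hΘ : Valid R I [] (Θ f) (sΘ f)) :
    Valid R I [] (.sym f) (Θ f) := by
  intro σ hσ
  have hΘσ := hΘ.subst_mem_domD hs hσ
  refine ⟨?_, hΘσ⟩
  rw [interp_congr_of_nil hf σ .var]
  refine hadeq f hf ?_
  rwa [interp_of_isSort hs, ← hf.subst_eq_of_nil σ]

theorem Typing.valid (hR : SymbolHeaded R) (hconf : LocallyConfluent R)
    (hpres : PresTyping R Θ sΘ) (hlfp : IsLfpInterp (interpF R) I)
    (hadeq : Adequate R Θ sΘ I) {t T : Trm F} (h : Typing R Θ sΘ Γ t T) : Valid R I Γ t T := by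
  have hI := hlfp.1
  induction h with
  | ax => exact .type_kind hR
  | var hs _ ihA => exact .var_zero hs ihA
  | weak _ _ _ _ ihb => exact ihb.weaken _
  | prod hs hA _ ihA ihB =>
    exact .pi hR hconf hlfp (hA.not_isKindLike_of_type hR hpres) hs ihA ihB
  | abs hs _ hP ihb ihP => exact .lam hR hconf hpres hlfp hP hs ihP ihb
  | app ht ha iht iha =>
    obtain ⟨_, hP⟩ := ht.pi_typable
    exact .app hR hconf hpres hI hP ((ha.isKindLike_iff hR hpres).not.2 hP.pi_domain.ne_kind)
      iht iha
  | conv ha hAB hB hs iha ihB =>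
    obtain rfl | ⟨_, -, hA⟩ := ha.type_eq_kind_or_typable
    · exact (hB.not_joinable_kind hR hpres hAB).elim
    · exact .conv hR hconf hpres hI hA hB hs hAB iha ihB
  | symb f hs hf ihf => exact .sym hadeq hs hf ihf

theorem models_var_comp (hR : SymbolHeaded R) (hconf : LocallyConfluent R)
    (hpres : PresTyping R Θ sΘ) (hlfp : IsLfpInterp (interpF R) I)
    (hadeq : Adequate R Θ sΘ I) (hΓ : Typing R Θ sΘ Γ .type .kind) (ρ : ℕ → ℕ) :
    Models R I (fun i => .var (ρ i)) Γ := by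
  induction Γ generalizing ρ with
  | nil => intro i A h; simp at h
  | cons A Γ ih =>
    obtain ⟨s, hs, hA⟩ := hΓ.context_head
    have hσ := ih hA.type_kind fun i => ρ (i + 1)
    have hAσ := (hA.valid hR hconf hpres hlfp hadeq).subst_mem_domD hs hσ
    exact models_cons_iff.2 ⟨(isCompPred_interp hR hconf hpres hlfp hA hAσ).var_mem hR _, hσ⟩

theorem Typing.sn (hR : SymbolHeaded R) (hconf : LocallyConfluent R)
    (hpres : PresTyping R Θ sΘ) (hlfp : IsLfpInterp (interpF R) I)
    (hadeq : Adequate R Θ sΘ I) {t T : Trm F} (h : Typing R Θ sΘ Γ t T) : SN R t := by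
  have hΓ := models_var_comp hR hconf hpres hlfp hadeq h.type_kind id
  obtain ⟨ht, hT⟩ := h.valid hR hconf hpres hlfp hadeq .var hΓ
  rw [subst_var] at ht
  obtain rfl | ⟨_, -, hT'⟩ := h.type_eq_kind_or_typable
  · rw [interp_of_isSort (.inr rfl)] at ht
    exact ht.1
  · exact (isCompPred_interp hR hconf hpres hlfp hT' hT).1 ht

end Soundness

theorem adequacy_general {F : Type} (R : Rules F) (Θ sΘ : F → Trm F)
    (hR : SymbolHeaded R)
    (hconf : LocallyConfluent R)
    (hpres : PresTyping R Θ sΘ)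
    (calI : Interp F) (hlfp : IsLfpInterp (interpF R) calI)
    (hadeq : Adequate R Θ sΘ calI) :
    (∀ (Γ : List (Trm F)) (t T : Trm F) (σ : ℕ → Trm F),
      Typing R Θ sΘ Γ t T → Models R calI σ Γ → Trm.subst σ t ∈ interp R calI T σ) ∧
    (∀ (Γ : List (Trm F)) (t T : Trm F), Typing R Θ sΘ Γ t T → SN R t) :=
  ⟨fun _ _ _ σ h hσ => (h.valid hR hconf hpres hlfp hadeq σ hσ).1,
    fun _ _ _ h => h.sn hR hconf hpres hlfp hadeq⟩

/-- Adequacy, Lemma 5 of the paper. If `→` is locally confluent and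
preserves typing and the typing map `Θ` is adequate, then `Γ ⊢ t : T` and `σ ⊨ Γ` imply
`tσ ∈ ⟦T⟧σ`; in particular, every typable term is strongly normalizing. -/
theorem adequacy {F : Type} (R : Rules F) (Θ sΘ : F → Trm F)
    (hRS : IsRewriteSystem R)
    (hconf : LocallyConfluent R)
    (hpres : PresTyping R Θ sΘ)
    (calI : Interp F) (hlfp : IsLfpInterp (interpF R) calI)
    (hadeq : Adequate R Θ sΘ calI) :
    (∀ (Γ : List (Trm F)) (t T : Trm F) (σ : ℕ → Trm F),
      Typing R Θ sΘ Γ t T → Models R calI σ Γ → Trm.subst σ t ∈ interp R calI T σ) ∧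
    (∀ (Γ : List (Trm F)) (t T : Trm F), Typing R Θ sΘ Γ t T → SN R t) :=
  adequacy_general R Θ sΘ (fun p hp => (hRS p hp).2) hconf hpres calI hlfp hadeq
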